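/- arXiv:1407.4720 — 2 statements merged into one kernel-verified Lean document; each statement's English description precedes it below -/
import Mathlib

section
/- For all but finitely many pairs of integers (k,n) with 1 < k < n, the following holds: if A is a set of n positive integers with d_k(A) ≥ C(n-1,k), then A is a k-anti-pencil. Formally: the set of pairs (k,n) with 1 < k < n for which there exists a set A of n positive integers with d_k(A) ≥ C(n-1,k) that is not a k-anti-pencil is finite. -/
/-- `B` is an `s`-divisor of `A` if `∑ B` divides `s · ∑ A`. -/
def IsSDivisor (s : ℕ) (A B : Finset ℕ) : Prop :=
  B.sum id ∣ s * A.sum id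

/-- `d^s_k(A)`: the number of `k`-element subsets of `A` that are `s`-divisors of `A`. -/
def dsk (s k : ℕ) (A : Finset ℕ) : ℕ :=
  ((A.powersetCard k).filter (fun B => B.sum id ∣ s * A.sum id)).card

/-- `A` is a `(k,s)`-anti-pencil if the `k`-element subsets of `A` that are `s`-divisors
of `A` are exactly the `k`-element subsets of `A \ {max A}`. -/
def IsAntiPencil (s k : ℕ) (A : Finset ℕ) : Prop :=
  ∃ h : A.Nonempty,
    (A.powersetCard k).filter (fun B => B.sum id ∣ s * A.sum id)
      = (A.erase (A.max' h)).powersetCard k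

/-!
Let `S` be the sum of `A` and `M` its largest element. If `S ≤ 2 * M`, a `k`-subset containing `M`
has sum strictly between `S / 2` and `S` and cannot be a divisor, so `C(n - 1, k)` divisors must be
all the `k`-subsets of `A \ {M}`. It remains to exclude `2 * M < S` when `n` is large.

If `2 * k ≤ n`, it is enough to find more than `C(n - 1, k - 1)` non-divisors. A `(k - 1)`-subset
has few extensions to a `k`-subset whose sum is a large divisor of `S`, because `S` has at most
`n / 8` divisors `d ≥ 8 * S / n`. If two elements are at least `8 * S / n`, most `k`-subsets through
either of them are thus non-divisors. Otherwise all elements but `M` are small. For `k` large,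
Chebyshev's inequality shows that most `k`-subsets have sum at least `8 * S / n`; for `k` bounded,
fixing one of the ten largest of the small elements already leaves a positive proportion of
non-divisors.

If `n < 2 * k`, divisors have sum at most `S / 2`, so their complements pairwise intersect and the
Erdős–Ko–Rado bound is exactly `C(n - 1, k)`. In the equality case every `k`-subset of `A \ {M}` is
a divisor, in particular `k < n - 1` as `2 * M < S`. Exchanging the next smaller element for each
element of the top `k`-subset `T` in turn yields divisors of `S` below `∑ T`, and the gaps between
these divisors contradict `S < 4 * ∑ T`.
-/

section

open Finset

section Families

variable {α : Type*} [DecidableEq α]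

lemma card_filter_powersetCard_succ_insert {U : Finset α} {m : α} (hm : m ∉ U) (k : ℕ)
    (P : Finset α → Prop) [DecidablePred P] :
    #{B ∈ (insert m U).powersetCard (k + 1) | P B} =
      #{B ∈ U.powersetCard (k + 1) | P B} + #{D ∈ U.powersetCard k | P (insert m D)} := by
  have hmD : ∀ D ∈ U.powersetCard k, m ∉ D := fun D hD h => hm ((mem_powersetCard.1 hD).1 h)
  have hinj : Set.InjOn (insert m)
      (↑{D ∈ U.powersetCard k | P (insert m D)} : Set (Finset α)) := by
    intro D hD D' hD' h
    rw [← erase_insert (hmD D (mem_filter.1 hD).1), h,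
      erase_insert (hmD D' (mem_filter.1 hD').1)]
  have hdisj : Disjoint (U.powersetCard (k + 1)) ((U.powersetCard k).image (insert m)) := by
    refine disjoint_left.2 fun B hB hB' => hm ?_
    obtain ⟨D, -, rfl⟩ := mem_image.1 hB'
    exact (mem_powersetCard.1 hB).1 (mem_insert_self m D)
  rw [← Nat.succ_eq_add_one, powersetCard_succ_insert hm, filter_union,
    card_union_of_disjoint (disjoint_filter_filter hdisj), filter_image, card_image_of_injOn hinj]

lemma card_filter_superset_le {U D : Finset α} {k : ℕ} {𝓕 : Finset (Finset α)}
    (h𝓕 : 𝓕 ⊆ U.powersetCard (k + 1)) (hD : #D = k) :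
    #{B ∈ 𝓕 | D ⊆ B} ≤ #{y ∈ U \ D | insert y D ∈ 𝓕} := by
  suffices himage : {B ∈ 𝓕 | D ⊆ B} ⊆
      {y ∈ U \ D | insert y D ∈ 𝓕}.image (fun y => insert y D) from
    (card_le_card himage).trans card_image_le
  intro B hB
  obtain ⟨hB𝓕, hDB⟩ := mem_filter.1 hB
  obtain ⟨hBU, hBk⟩ := mem_powersetCard.1 (h𝓕 hB𝓕)
  have hsdiff : #(B \ D) = 1 := by
    rw [card_sdiff_of_subset hDB, hBk, hD, Nat.add_sub_cancel_left]
  obtain ⟨y, hy⟩ := card_eq_one.1 hsdiff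
  obtain ⟨hyB, hyD⟩ := mem_sdiff.1 (hy ▸ mem_singleton_self y : y ∈ B \ D)
  have hinsert : insert y D = B := by rw [insert_eq, ← hy, sdiff_union_of_subset hDB]
  exact mem_image.2 ⟨y, mem_filter.2 ⟨mem_sdiff.2 ⟨hBU hyB, hyD⟩, hinsert ▸ hB𝓕⟩, hinsert⟩

lemma card_mul_le_of_card_extensions_le {U : Finset α} {k : ℕ} {𝓕 : Finset (Finset α)} {t : ℝ}
    (h𝓕 : 𝓕 ⊆ U.powersetCard (k + 1)) (hk : k ≤ #U)
    (ht : ∀ D ∈ U.powersetCard k, (#{y ∈ U \ D | insert y D ∈ 𝓕} : ℝ) ≤ t) :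
    #𝓕 * (#U - k : ℝ) ≤ t * (#U).choose (k + 1) := by
  have hfaces : ∀ B ∈ 𝓕, ((k + 1 : ℕ) : ℝ) ≤
      #(bipartiteAbove (fun B D => D ⊆ B) (U.powersetCard k) B) := by
    intro B hB
    norm_cast
    obtain ⟨hBU, hBk⟩ := mem_powersetCard.1 (h𝓕 hB)
    have hcard : #(B.powersetCard k) = k + 1 := by
      rw [card_powersetCard, hBk, Nat.choose_succ_self_right]
    rw [← hcard]
    refine card_le_card fun D hD => ?_
    obtain ⟨hDB, hDk⟩ := mem_powersetCard.1 hD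
    exact (mem_bipartiteAbove _).2 ⟨mem_powersetCard.2 ⟨hDB.trans hBU, hDk⟩, hDB⟩
  have hextensions : ∀ D ∈ U.powersetCard k,
      (#(bipartiteBelow (fun B D => D ⊆ B) 𝓕 D) : ℝ) ≤ t := fun D hD =>
    (ht D hD).trans' (Nat.cast_le.2 (card_filter_superset_le h𝓕 (mem_powersetCard.1 hD).2))
  have hdouble : (#𝓕 : ℝ) * (k + 1 : ℕ) ≤ (#U).choose k * t := by
    simpa only [card_powersetCard, nsmul_eq_mul] using
      card_nsmul_le_card_nsmul (R := ℝ) (s := 𝓕) (t := U.powersetCard k)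
        (m := ((k + 1 : ℕ) : ℝ)) (n := t) (fun B D => D ⊆ B) hfaces hextensions
  have hchoose : ((#U).choose (k + 1) : ℝ) * (k + 1 : ℕ) = (#U).choose k * (#U - k : ℝ) := by
    rw [← Nat.cast_sub hk]
    exact_mod_cast Nat.choose_succ_right_eq (#U) k
  have hUk : (0 : ℝ) ≤ #U - k := sub_nonneg.2 (Nat.cast_le.2 hk)
  have hk₀ : (0 : ℝ) < (k + 1 : ℕ) := by positivity
  refine le_of_mul_le_mul_right ?_ hk₀
  calc #𝓕 * (#U - k : ℝ) * (k + 1 : ℕ) = #𝓕 * (k + 1 : ℕ) * (#U - k : ℝ) := by ring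
    _ ≤ (#U).choose k * t * (#U - k : ℝ) := by gcongr
    _ = t * ((#U).choose k * (#U - k : ℝ)) := by ring
    _ = t * (#U).choose (k + 1) * (k + 1 : ℕ) := by rw [← hchoose]; ring

lemma card_le_choose_of_intersecting {X : Finset α} {k : ℕ} {𝓕 : Finset (Finset α)}
    (h𝓕 : 𝓕 ⊆ X.powersetCard k) (hint : (𝓕 : Set (Finset α)).Intersecting) (hk : 2 * k ≤ #X) :
    #𝓕 ≤ (#X - 1).choose (k - 1) := by
  set e : Fin #X ↪ α := X.equivFin.symm.toEmbedding.trans (Function.Embedding.subtype _) with he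
  have hX : univ.map e = X := by
    rw [he, ← map_map, map_univ_equiv, univ_eq_attach, attach_map_val]
  set 𝓖 : Finset (Finset (Fin #X)) := {G | G.map e ∈ 𝓕}
  have hmap : 𝓖.map (mapEmbedding e).toEmbedding = 𝓕 := by
    refine Subset.antisymm (fun B hB => ?_) fun B hB => ?_
    · obtain ⟨G, hG, rfl⟩ := mem_map.1 hB
      exact (mem_filter.1 hG).2
    · obtain ⟨G, -, rfl⟩ := subset_map_iff.1 (hX.symm ▸ (mem_powersetCard.1 (h𝓕 hB)).1)
      exact mem_map.2 ⟨G, mem_filter.2 ⟨mem_univ _, hB⟩, rfl⟩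
  rw [← hmap, card_map]
  refine erdos_ko_rado (fun G hG G' hG' hdisj => ?_) (fun G hG => ?_) (by omega)
  · exact hint (mem_filter.1 hG).2 (mem_filter.1 hG').2 ((disjoint_map e).2 hdisj)
  · rw [← card_map e]
    exact (mem_powersetCard.1 (h𝓕 (mem_filter.1 hG).2)).2

lemma exists_upper_subset_card_eq {β : Type*} [LinearOrder β] {A : Finset β} {j : ℕ} (hj : j ≤ #A) :
    ∃ T ⊆ A, #T = j ∧ ∀ x ∈ T, ∀ y ∈ A \ T, y < x := by
  induction j with
  | zero => exact ⟨∅, by simp⟩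
  | succ j ih =>
    obtain ⟨T, hTA, hTj, hT⟩ := ih (by omega)
    have hne : (A \ T).Nonempty := card_pos.1 (by rw [card_sdiff_of_subset hTA]; omega)
    obtain ⟨hmA, hmT⟩ := mem_sdiff.1 ((A \ T).max'_mem hne)
    refine ⟨insert ((A \ T).max' hne) T, insert_subset hmA hTA,
      by rw [card_insert_of_notMem hmT, hTj], fun x hx y hy => ?_⟩
    obtain ⟨hyA, hym, hyT⟩ : y ∈ A ∧ y ≠ (A \ T).max' hne ∧ y ∉ T := by simpa using hy
    have hyAT : y ∈ A \ T := mem_sdiff.2 ⟨hyA, hyT⟩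
    rcases mem_insert.1 hx with rfl | hxT
    · exact ((A \ T).le_max' y hyAT).lt_of_ne hym
    · exact hT x hxT y hyAT

end Families

section Binomials

lemma choose_succ_le_choose_sub_add (m j r : ℕ) :
    m.choose (r + 1) ≤ (m - j).choose (r + 1) + j * (m - 1).choose r := by
  induction j with
  | zero => simp
  | succ j ih =>
    rcases Nat.lt_or_ge j m with hjm | hmj
    · have hpascal : (m - j).choose (r + 1) =
          (m - (j + 1)).choose r + (m - (j + 1)).choose (r + 1) := by
        rw [show m - j = m - (j + 1) + 1 by omega, Nat.choose_succ_succ]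
      have hmono : (m - (j + 1)).choose r ≤ (m - 1).choose r := Nat.choose_le_choose r (by omega)
      linarith
    · rw [show m - (j + 1) = m - j by omega]
      linarith

lemma mul_choose_le_mul_choose_sub_add (m j k : ℕ) :
    m * m.choose k ≤ m * (m - j).choose k + j * k * m.choose k := by
  rcases k with _ | r
  · simp
  rcases m with _ | m
  · simp
  calc (m + 1) * (m + 1).choose (r + 1)
      ≤ (m + 1) * ((m + 1 - j).choose (r + 1) + j * m.choose r) := by
        gcongr
        exact choose_succ_le_choose_sub_add (m + 1) j r
    _ = (m + 1) * (m + 1 - j).choose (r + 1) + j * ((m + 1) * m.choose r) := by ring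
    _ = (m + 1) * (m + 1 - j).choose (r + 1) + j * (r + 1) * (m + 1).choose (r + 1) := by
        rw [Nat.add_one_mul_choose_eq]; ring

lemma choose_succ_le_two_mul_choose {m k : ℕ} (hk : 2 * k ≤ m + 1) :
    (m + 1).choose k ≤ 2 * m.choose k := by
  have hloss := mul_choose_le_mul_choose_sub_add (m + 1) 1 k
  simp only [Nat.add_sub_cancel, one_mul] at hloss
  nlinarith [Nat.mul_le_mul_right ((m + 1).choose k) hk]

end Binomials

section Sampling

variable {α : Type*}

lemma card_filter_mem_powersetCard [DecidableEq α] {A : Finset α} {a : α} (ha : a ∈ A) (j : ℕ) :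
    #{B ∈ A.powersetCard (j + 1) | a ∈ B} = (#A - 1).choose j := by
  simpa using card_filter_powersetCard_subset {a} A (j + 1) (by simpa using ha) (by simp)

lemma card_filter_pair_subset_powersetCard [DecidableEq α] {A : Finset α} {a b : α}
    (ha : a ∈ A) (hb : b ∈ A) (hab : a ≠ b) (j : ℕ) :
    #{B ∈ A.powersetCard (j + 2) | a ∈ B ∧ b ∈ B} = (#A - 2).choose j := by
  simpa [hab, insert_subset_iff] using
    card_filter_powersetCard_subset {a, b} A (j + 2) (by simp [insert_subset_iff, ha, hb])
      (by simp [hab])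

lemma sum_powersetCard_sum_sq {A : Finset α} {m : ℕ} (hA : #A = m + 2) (j : ℕ) (f : α → ℝ) :
    ∑ B ∈ A.powersetCard (j + 2), (∑ b ∈ B, f b) ^ 2 =
      m.choose j * (∑ a ∈ A, f a) ^ 2 + m.choose (j + 1) * ∑ a ∈ A, f a ^ 2 := by
  classical
  have hpairs : ∀ a ∈ A, ∀ b ∈ A, (#{B ∈ A.powersetCard (j + 2) | a ∈ B ∧ b ∈ B} : ℝ) =
      m.choose j + if a = b then (m.choose (j + 1) : ℝ) else 0 := by
    intro a ha b hb
    split_ifs with hab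
    · subst hab
      have hcount := card_filter_mem_powersetCard ha (j + 1)
      rw [hA, Nat.add_succ_sub_one, Nat.choose_succ_succ] at hcount
      simp only [and_self]
      exact_mod_cast hcount
    · rw [card_filter_pair_subset_powersetCard ha hb hab, hA, Nat.add_sub_cancel, add_zero]
  have hexpand : ∀ B ∈ A.powersetCard (j + 2), (∑ b ∈ B, f b) ^ 2 =
      ∑ a ∈ A, ∑ b ∈ A, if a ∈ B ∧ b ∈ B then f a * f b else 0 := by
    intro B hB
    have hBA : A ∩ B = B := inter_eq_right.2 (mem_powersetCard.1 hB).1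
    simp only [ite_and, sum_ite_irrel, sum_const_zero, sum_ite_mem, hBA, sq, sum_mul_sum]
  rw [sum_congr rfl hexpand, sum_comm]
  calc ∑ a ∈ A, ∑ B ∈ A.powersetCard (j + 2), ∑ b ∈ A, (if a ∈ B ∧ b ∈ B then f a * f b else 0)
      = ∑ a ∈ A, ∑ b ∈ A, #{B ∈ A.powersetCard (j + 2) | a ∈ B ∧ b ∈ B} * (f a * f b) := by
        refine sum_congr rfl fun a _ => ?_
        rw [sum_comm]
        simp only [← sum_filter, sum_const, nsmul_eq_mul]
    _ = ∑ a ∈ A, ∑ b ∈ A, (m.choose j * (f a * f b) +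
          if a = b then m.choose (j + 1) * (f a * f b) else 0) := by
        refine sum_congr rfl fun a ha => sum_congr rfl fun b hb => ?_
        rw [hpairs a ha b hb, add_mul, ite_mul, zero_mul]
    _ = m.choose j * (∑ a ∈ A, f a) ^ 2 + m.choose (j + 1) * ∑ a ∈ A, f a ^ 2 := by
        simp only [sum_add_distrib, sum_ite_eq, ← mul_sum, sq, sum_mul_sum]
        rw [mul_sum (f := fun a => f a * f a)]
        exact congrArg _ (sum_congr rfl fun a ha => if_pos ha)

lemma sum_powersetCard_sum_sub_mean_sq_le {A : Finset α} {k : ℕ} (hk : 2 ≤ k) (hkA : k ≤ #A)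
    (f : α → ℝ) :
    ∑ B ∈ A.powersetCard k, (∑ b ∈ B, f b - k * ((∑ a ∈ A, f a) / #A)) ^ 2 ≤
      (#A).choose k * (k / #A * ∑ a ∈ A, f a ^ 2) := by
  obtain ⟨j, rfl⟩ := Nat.exists_eq_add_of_le' hk
  obtain ⟨m, hA⟩ := Nat.exists_eq_add_of_le' (hk.trans hkA)
  have hApos : (0 : ℝ) < #A := by rw [hA]; positivity
  set μ := (∑ a ∈ A, f a) / #A with hμ
  have hsum : ∑ a ∈ A, f a = #A * μ := by rw [hμ]; field_simp
  have hcentered : ∑ a ∈ A, (f a - μ) = 0 := by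
    rw [sum_sub_distrib, sum_const, nsmul_eq_mul, hsum, sub_self]
  have hsq : ∑ a ∈ A, (f a - μ) ^ 2 ≤ ∑ a ∈ A, f a ^ 2 := by
    have hid : ∑ a ∈ A, (f a - μ) ^ 2 = ∑ a ∈ A, f a ^ 2 - #A * μ ^ 2 := by
      simp only [sub_sq, sum_add_distrib, sum_sub_distrib, sum_const, nsmul_eq_mul, ← sum_mul,
        ← mul_sum, hsum]
      ring
    rw [hid]
    exact sub_le_self _ (mul_nonneg hApos.le (sq_nonneg μ))
  have hchoose : (m.choose (j + 1) : ℝ) ≤ (#A).choose (j + 2) * ((j + 2 : ℕ) / #A) := by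
    rw [mul_div_assoc', le_div_iff₀ hApos]
    have hle : m.choose (j + 1) ≤ (m + 1).choose (j + 1) := Nat.choose_le_succ _ _
    have habsorb := Nat.add_one_mul_choose_eq (m + 1) (j + 1)
    rw [hA]
    exact_mod_cast (by nlinarith : m.choose (j + 1) * (m + 2) ≤ (m + 2).choose (j + 2) * (j + 2))
  calc ∑ B ∈ A.powersetCard (j + 2), (∑ b ∈ B, f b - (j + 2 : ℕ) * μ) ^ 2
      = ∑ B ∈ A.powersetCard (j + 2), (∑ b ∈ B, (f b - μ)) ^ 2 := by
        refine sum_congr rfl fun B hB => ?_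
        rw [sum_sub_distrib, sum_const, nsmul_eq_mul, (mem_powersetCard.1 hB).2]
    _ = m.choose (j + 1) * ∑ a ∈ A, (f a - μ) ^ 2 := by
        rw [sum_powersetCard_sum_sq hA, hcentered]; ring
    _ ≤ (#A).choose (j + 2) * ((j + 2 : ℕ) / #A) * ∑ a ∈ A, f a ^ 2 :=
        mul_le_mul hchoose hsq (sum_nonneg fun _ _ => sq_nonneg _)
          (mul_nonneg (Nat.cast_nonneg _) (div_nonneg (Nat.cast_nonneg _) hApos.le))
    _ = _ := mul_assoc _ _ _

lemma card_filter_sum_le_half_mean_mul_le {A : Finset α} {k : ℕ} (hk : 2 ≤ k) (hkA : k ≤ #A)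
    {f : α → ℝ} {b μ : ℝ} (hf₀ : ∀ a ∈ A, 0 ≤ f a) (hfb : ∀ a ∈ A, f a ≤ b) (hμ₀ : 0 < μ)
    (hμ : k * ∑ a ∈ A, f a = μ * #A) :
    #{B ∈ A.powersetCard k | ∑ a ∈ B, f a ≤ μ / 2} * μ ≤ 4 * b * (#A).choose k := by
  have hApos : (0 : ℝ) < #A := by exact_mod_cast (by omega : 0 < #A)
  have hmean : k * ((∑ a ∈ A, f a) / #A) = μ := by rw [← mul_div_assoc, hμ]; field_simp
  have hsq : ∑ a ∈ A, f a ^ 2 ≤ b * ∑ a ∈ A, f a := by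
    rw [mul_sum]
    refine sum_le_sum fun a ha => ?_
    rw [sq]
    exact mul_le_mul_of_nonneg_right (hfb a ha) (hf₀ a ha)
  have hchebyshev : #{B ∈ A.powersetCard k | ∑ a ∈ B, f a ≤ μ / 2} * (μ / 2) ^ 2 ≤
      (#A).choose k * (b * μ) := by
    calc #{B ∈ A.powersetCard k | ∑ a ∈ B, f a ≤ μ / 2} * (μ / 2) ^ 2
        = ∑ B ∈ A.powersetCard k with ∑ a ∈ B, f a ≤ μ / 2, (μ / 2) ^ 2 := by
          rw [sum_const, nsmul_eq_mul]
      _ ≤ ∑ B ∈ A.powersetCard k with ∑ a ∈ B, f a ≤ μ / 2, (∑ a ∈ B, f a - μ) ^ 2 := by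
          refine sum_le_sum fun B hB => ?_
          nlinarith [(mem_filter.1 hB).2]
      _ ≤ ∑ B ∈ A.powersetCard k, (∑ a ∈ B, f a - μ) ^ 2 :=
          sum_le_sum_of_subset_of_nonneg (filter_subset _ _) fun B _ _ => sq_nonneg _
      _ ≤ (#A).choose k * (k / #A * ∑ a ∈ A, f a ^ 2) := by
          simpa only [hmean] using sum_powersetCard_sum_sub_mean_sq_le hk hkA f
      _ ≤ (#A).choose k * (k / #A * (b * ∑ a ∈ A, f a)) := by gcongr
      _ = (#A).choose k * (b * μ) := by rw [← hmean]; ring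
  nlinarith

end Sampling

section Divisors

lemma injOn_div_divisors (S : ℕ) : Set.InjOn (fun d => S / d) S.divisors := fun _ hd _ hd' h =>
  (Nat.div_eq_iff_eq_of_dvd_dvd (Nat.ne_zero_of_mem_divisors hd) (Nat.dvd_of_mem_divisors hd)
    (Nat.dvd_of_mem_divisors hd')).1 h

lemma card_filter_mul_le_mul_divisors_le {S m : ℕ} (n : ℕ) (hm : 0 < m) :
    #{d ∈ S.divisors | m * S ≤ n * d} ≤ n / m := by
  have hmaps : ∀ d ∈ ({d ∈ S.divisors | m * S ≤ n * d} : Finset ℕ), S / d ∈ Ioc 0 (n / m) := by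
    intro d hd
    simp only [mem_filter, Nat.mem_divisors] at hd
    obtain ⟨⟨⟨e, rfl⟩, hS⟩, hle⟩ := hd
    obtain ⟨hd₀, he₀⟩ := Nat.mul_ne_zero_iff.1 hS
    rw [Nat.mul_div_cancel_left e (Nat.pos_of_ne_zero hd₀), mem_Ioc, Nat.le_div_iff_mul_le hm]
    exact ⟨Nat.pos_of_ne_zero he₀,
      Nat.le_of_mul_le_mul_right (by linarith) (Nat.pos_of_ne_zero hd₀)⟩
  simpa using card_le_card_of_injOn _ hmaps
    ((injOn_div_divisors S).mono (coe_subset.2 (filter_subset _ _)))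

lemma card_divisors_Icc_le {a b : ℝ} (S : ℕ) (ha : 0 < a) (hab : a ≤ b) :
    (#{d ∈ S.divisors | ((d : ℕ) : ℝ) ∈ Set.Icc a b} : ℝ) ≤ S / a - S / b + 1 := by
  have hmaps : ∀ d ∈ ({d ∈ S.divisors | ((d : ℕ) : ℝ) ∈ Set.Icc a b} : Finset ℕ),
      S / d ∈ Icc ⌈(S : ℝ) / b⌉₊ ⌊(S : ℝ) / a⌋₊ := by
    intro d hd
    simp only [mem_filter, Nat.mem_divisors] at hd
    obtain ⟨⟨hdS, -⟩, had, hdb⟩ := hd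
    have hd₀ : (0 : ℝ) < d := ha.trans_le had
    rw [mem_Icc, Nat.ceil_le, Nat.cast_div hdS hd₀.ne', Nat.le_floor_iff (by positivity),
      Nat.cast_div hdS hd₀.ne']
    exact ⟨by gcongr, by gcongr⟩
  have hcard := card_le_card_of_injOn _ hmaps
    ((injOn_div_divisors S).mono (coe_subset.2 (filter_subset _ _)))
  have hceil : ⌈(S : ℝ) / b⌉₊ ≤ ⌊(S : ℝ) / a⌋₊ + 1 :=
    (Nat.ceil_mono (by gcongr)).trans (Nat.ceil_le_floor_add_one _)
  have hfloor : (⌊(S : ℝ) / a⌋₊ : ℝ) ≤ S / a := Nat.floor_le (by positivity)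
  calc (#{d ∈ S.divisors | ((d : ℕ) : ℝ) ∈ Set.Icc a b} : ℝ)
      ≤ (⌊(S : ℝ) / a⌋₊ + 1 - ⌈(S : ℝ) / b⌉₊ : ℕ) := by
        rw [Nat.card_Icc] at hcard
        exact_mod_cast hcard
    _ = ⌊(S : ℝ) / a⌋₊ + 1 - ⌈(S : ℝ) / b⌉₊ := by
        rw [Nat.cast_sub hceil, Nat.cast_add_one]
    _ ≤ S / a - S / b + 1 := by linarith [Nat.le_ceil ((S : ℝ) / b)]

lemma card_filter_add_dvd_le {S τ : ℕ} {Y : Finset ℕ} {σ a b : ℝ} (hS : S ≠ 0) (hστ : σ ≤ τ)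
    (hσa : 0 < σ + a) (hab : a ≤ b) (hY : ∀ y ∈ Y, a ≤ y ∧ y ≤ b) :
    (#{y ∈ Y | τ + y ∣ S} : ℝ) ≤ S / (σ + a) - S / (σ + b) + 1 := by
  have hinj : Set.InjOn (fun y => τ + y) ({y ∈ Y | τ + y ∣ S} : Finset ℕ) :=
    (add_right_injective τ).injOn
  have hmaps : ∀ y ∈ ({y ∈ Y | τ + y ∣ S} : Finset ℕ), τ + y ∈
      ({d ∈ S.divisors | ((d : ℕ) : ℝ) ∈ Set.Icc (τ + a) (τ + b)} : Finset ℕ) := by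
    intro y hy
    obtain ⟨hyY, hyS⟩ := mem_filter.1 hy
    rw [mem_filter, Nat.mem_divisors, Set.mem_Icc, Nat.cast_add, add_le_add_iff_left,
      add_le_add_iff_left]
    exact ⟨⟨hyS, hS⟩, hY y hyY⟩
  have hcard : (#{y ∈ Y | τ + y ∣ S} : ℝ) ≤ S / (τ + a) - S / (τ + b) + 1 :=
    (Nat.cast_le.2 (card_le_card_of_injOn _ hmaps hinj)).trans
      (card_divisors_Icc_le S (by linarith) (by linarith))
  have hshift : (S : ℝ) / (τ + a) - S / (τ + b) ≤ S / (σ + a) - S / (σ + b) := by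
    have hgap : ∀ ρ : ℝ, 0 < ρ + a →
        (S : ℝ) / (ρ + a) - S / (ρ + b) = S * (b - a) / ((ρ + a) * (ρ + b)) := fun ρ hρ => by
      have hρb : 0 < ρ + b := by linarith
      field_simp
      ring
    have hσb : 0 < σ + b := by linarith
    have : 0 ≤ b - a := by linarith
    have hτa : 0 < τ + a := by linarith
    rw [hgap τ hτa, hgap σ hσa]
    gcongr
  linarith

lemma two_mul_sum_add_card_filter_mul_le {U : Finset ℕ} {x : ℕ} (hUx : ∀ y ∈ U, y ≤ x) :
    2 * ∑ y ∈ U, y + #{y ∈ U | 2 * y < x} * x ≤ 2 * (#U * x) := by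
  calc 2 * ∑ y ∈ U, y + #{y ∈ U | 2 * y < x} * x
      = ∑ y ∈ U, (2 * y + if 2 * y < x then x else 0) := by
        rw [sum_add_distrib, mul_sum, ← sum_filter, sum_const, smul_eq_mul]
    _ ≤ ∑ _y ∈ U, 2 * x := sum_le_sum fun y hy => by
        have := hUx y hy
        split_ifs <;> omega
    _ = 2 * (#U * x) := by rw [sum_const, smul_eq_mul]; ring

lemma card_filter_add_dvd_le_of_le_sum {S x τ : ℕ} {U : Finset ℕ} (hS : S ≠ 0) (hx : 0 < x)
    (hxτ : x ≤ τ) (hUx : ∀ y ∈ U, y ≤ x) (hsum : 11 * S ≤ 24 * ∑ y ∈ U, y) :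
    (#{y ∈ U | τ + y ∣ S} : ℝ) ≤ 4 / 5 * #U + 1 := by
  have hx₀ : (0 : ℝ) < x := Nat.cast_pos.2 hx
  have hxτ' : (x : ℝ) ≤ τ := Nat.cast_le.2 hxτ
  obtain ⟨w, hw⟩ : ∃ w : ℝ, S = w * x := ⟨S / x, by field_simp⟩
  rcases le_total w (8 / 5 * #U) with hfew | hmany
  · have hcount := card_filter_add_dvd_le (a := 0) (b := x) hS hxτ' (by simpa) hx₀.le
      fun y hy => ⟨Nat.cast_nonneg y, Nat.cast_le.2 (hUx y hy)⟩
    have hvalue : (S : ℝ) / (x + 0) - S / (x + x) = w / 2 := by rw [hw]; field_simp; ring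
    linarith
  · have hlow : (#{y ∈ U | 2 * y < x} : ℝ) ≤ 2 * #U - 11 / 12 * w := by
      have hlow' : (2 * ∑ y ∈ U, y + #{y ∈ U | 2 * y < x} * x : ℝ) ≤ 2 * (#U * x) := by
        exact_mod_cast two_mul_sum_add_card_filter_mul_le hUx
      have hsum' : (11 * S : ℝ) ≤ 24 * (∑ y ∈ U, y : ℕ) := by exact_mod_cast hsum
      refine le_of_mul_le_mul_right ?_ hx₀
      rw [hw] at hsum'
      linarith
    have hhigh : (#{y ∈ {y ∈ U | ¬ 2 * y < x} | τ + y ∣ S} : ℝ) ≤ w / 6 + 1 := by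
      have hcount := card_filter_add_dvd_le (Y := {y ∈ U | ¬ 2 * y < x}) (a := x / 2) (b := x)
        hS hxτ' (by positivity) (by linarith) fun y hy => by
          obtain ⟨hyU, hyx⟩ := mem_filter.1 hy
          have : (x : ℝ) ≤ 2 * y := by exact_mod_cast not_lt.1 hyx
          exact ⟨by linarith, Nat.cast_le.2 (hUx y hyU)⟩
      have hvalue : (S : ℝ) / (x + x / 2) - S / (x + x) = w / 6 := by rw [hw]; field_simp; ring
      linarith
    have hcover : (#{y ∈ U | τ + y ∣ S} : ℝ) ≤
        #{y ∈ U | 2 * y < x} + #{y ∈ {y ∈ U | ¬ 2 * y < x} | τ + y ∣ S} := by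
      norm_cast
      rw [← card_filter_add_card_filter_not (s := {y ∈ U | τ + y ∣ S}) (fun y => 2 * y < x),
        filter_comm (fun y => τ + y ∣ S) (fun y => 2 * y < x),
        filter_comm (fun y => τ + y ∣ S) (fun y => ¬ 2 * y < x)]
      gcongr
      exact filter_subset _ _
    linarith

end Divisors

section DivisorSets

/-- The `k`-element subsets `D` of `U` for which the shifted sum `σ + ∑ D` divides `S`. The shift
stands for elements that have already been chosen. -/
def divisorSets (S σ k : ℕ) (U : Finset ℕ) : Finset (Finset ℕ) :=
  {D ∈ U.powersetCard k | σ + ∑ d ∈ D, d ∣ S}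

/-- The `k`-element subsets `D` of `U` for which the shifted sum `σ + ∑ D` does not divide `S`. -/
def nonDivisorSets (S σ k : ℕ) (U : Finset ℕ) : Finset (Finset ℕ) :=
  {D ∈ U.powersetCard k | ¬ σ + ∑ d ∈ D, d ∣ S}

lemma card_divisorSets_add_card_nonDivisorSets (S σ k : ℕ) (U : Finset ℕ) :
    #(divisorSets S σ k U) + #(nonDivisorSets S σ k U) = (#U).choose k := by
  rw [divisorSets, nonDivisorSets, card_filter_add_card_filter_not, card_powersetCard]

lemma card_nonDivisorSets_mono (S σ k : ℕ) {U V : Finset ℕ} (hUV : U ⊆ V) :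
    #(nonDivisorSets S σ k U) ≤ #(nonDivisorSets S σ k V) :=
  card_le_card (filter_subset_filter _ (powersetCard_mono hUV))

lemma card_filter_sum_powersetCard_succ_insert {U : Finset ℕ} {x : ℕ} (hx : x ∉ U) (σ k : ℕ)
    (P : ℕ → Prop) [DecidablePred P] :
    #{B ∈ (insert x U).powersetCard (k + 1) | P (σ + ∑ b ∈ B, b)} =
      #{B ∈ U.powersetCard (k + 1) | P (σ + ∑ b ∈ B, b)} +
        #{D ∈ U.powersetCard k | P (σ + x + ∑ d ∈ D, d)} := by
  rw [card_filter_powersetCard_succ_insert hx]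
  congr 2
  refine filter_congr fun D hD => ?_
  rw [sum_insert fun hxD => hx ((mem_powersetCard.1 hD).1 hxD), add_assoc]

lemma card_nonDivisorSets_succ_insert {U : Finset ℕ} {x : ℕ} (hx : x ∉ U) (S σ k : ℕ) :
    #(nonDivisorSets S σ (k + 1) (insert x U)) =
      #(nonDivisorSets S σ (k + 1) U) + #(nonDivisorSets S (σ + x) k U) :=
  card_filter_sum_powersetCard_succ_insert hx σ k fun d => ¬ d ∣ S

lemma sum_card_nonDivisorSets_le {T U : Finset ℕ} (hTU : Disjoint T U) (S σ k : ℕ) :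
    ∑ x ∈ T, #(nonDivisorSets S (σ + x) k U) ≤ #(nonDivisorSets S σ (k + 1) (T ∪ U)) := by
  induction T using Finset.induction_on with
  | empty => simp
  | insert x T hxT ih =>
    obtain ⟨hxU, hTU'⟩ := disjoint_insert_left.1 hTU
    have hx : x ∉ T ∪ U := by simp [hxT, hxU]
    calc ∑ y ∈ insert x T, #(nonDivisorSets S (σ + y) k U)
        = ∑ y ∈ T, #(nonDivisorSets S (σ + y) k U) + #(nonDivisorSets S (σ + x) k U) := by
          rw [sum_insert hxT, add_comm]
      _ ≤ #(nonDivisorSets S σ (k + 1) (T ∪ U)) + #(nonDivisorSets S (σ + x) k (T ∪ U)) :=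
          add_le_add (ih hTU') (card_nonDivisorSets_mono S (σ + x) k subset_union_right)
      _ = #(nonDivisorSets S σ (k + 1) (insert x T ∪ U)) := by
          rw [insert_union, card_nonDivisorSets_succ_insert hx]

lemma card_divisorSets_lt_of_choose_lt {S σ k : ℕ} {A : Finset ℕ} (hA : A.Nonempty)
    (hnd : (#A - 1).choose k < #(nonDivisorSets S σ (k + 1) A)) :
    #(divisorSets S σ (k + 1) A) < (#A - 1).choose (k + 1) := by
  have htotal := card_divisorSets_add_card_nonDivisorSets S σ (k + 1) A
  obtain ⟨m, hm⟩ := Nat.exists_eq_add_one_of_ne_zero hA.card_ne_zero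
  rw [hm, Nat.choose_succ_succ'] at htotal
  rw [hm, Nat.add_sub_cancel] at hnd ⊢
  omega

lemma card_filter_sum_mul_le {σ r : ℕ} {U : Finset ℕ} {P : ℕ → Prop} [DecidablePred P] {t : ℝ}
    (hr : r ≤ #U)
    (ht : ∀ D ∈ U.powersetCard r, (#{y ∈ U | P (σ + ∑ d ∈ D, d + y)} : ℝ) ≤ t) :
    #{B ∈ U.powersetCard (r + 1) | P (σ + ∑ b ∈ B, b)} * (#U - r : ℝ) ≤
      t * (#U).choose (r + 1) := by
  refine card_mul_le_of_card_extensions_le (filter_subset _ _) hr fun D hD =>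
    (ht D hD).trans' (Nat.cast_le.2 (card_le_card fun y hy => ?_))
  obtain ⟨hyUD, hyP⟩ := mem_filter.1 hy
  obtain ⟨hyU, hyD⟩ := mem_sdiff.1 hyUD
  rw [mem_filter, sum_insert hyD, add_comm y, ← add_assoc] at hyP
  exact mem_filter.2 ⟨hyU, hyP.2⟩

lemma card_filter_large_divisorSets_le {n r S : ℕ} {U : Finset ℕ} (hS : S ≠ 0) (hr : r < #U)
    (hn : n + 2 * r ≤ 2 * #U) (σ : ℕ) :
    4 * #{D ∈ divisorSets S σ (r + 1) U | 8 * S ≤ n * (σ + ∑ d ∈ D, d)} ≤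
      (#U).choose (r + 1) := by
  have hextend : ∀ D ∈ U.powersetCard r,
      (#{y ∈ U | σ + ∑ d ∈ D, d + y ∣ S ∧ 8 * S ≤ n * (σ + ∑ d ∈ D, d + y)} : ℝ) ≤ n / 8 := by
    intro D _
    refine le_trans (Nat.cast_le.2 ?_) Nat.cast_div_le
    refine le_trans ?_ (card_filter_mul_le_mul_divisors_le (S := S) n (by norm_num : 0 < 8))
    refine card_le_card_of_injOn (fun y => σ + ∑ d ∈ D, d + y) (fun y hy => ?_)
      (add_right_injective _).injOn
    obtain ⟨-, hdvd, hlarge⟩ := mem_filter.1 hy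
    exact mem_filter.2 ⟨Nat.mem_divisors.2 ⟨hdvd, hS⟩, hlarge⟩
  have hcount := card_filter_sum_mul_le (P := fun d => d ∣ S ∧ 8 * S ≤ n * d) hr.le hextend
  rw [divisorSets, filter_filter]
  have hr' : (0 : ℝ) < #U - r := sub_pos.2 (Nat.cast_lt.2 hr)
  have hn' : (n / 8 : ℝ) ≤ (#U - r) / 4 := by
    have : (n + 2 * r : ℝ) ≤ 2 * #U := by exact_mod_cast hn
    linarith
  have hbound := hcount.trans (mul_le_mul_of_nonneg_right hn' (Nat.cast_nonneg _))
  have : (4 * #{D ∈ U.powersetCard (r + 1) | σ + ∑ d ∈ D, d ∣ S ∧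
      8 * S ≤ n * (σ + ∑ d ∈ D, d)} : ℝ) ≤ (#U).choose (r + 1) :=
    le_of_mul_le_mul_right (by linarith) hr'
  exact_mod_cast this

end DivisorSets

section SmallSets

lemma three_mul_choose_le_four_mul_card_nonDivisorSets {n r S σ : ℕ} {U : Finset ℕ} (hS : S ≠ 0)
    (hr : r < #U) (hn : n + 2 * r ≤ 2 * #U) (hσ : 8 * S ≤ n * σ) :
    3 * (#U).choose (r + 1) ≤ 4 * #(nonDivisorSets S σ (r + 1) U) := by
  have hlarge := card_filter_large_divisorSets_le hS hr hn σ
  rw [filter_true_of_mem fun D _ => hσ.trans (Nat.mul_le_mul_left n (Nat.le_add_right σ _))]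
    at hlarge
  have htotal := card_divisorSets_add_card_nonDivisorSets S σ (r + 1) U
  omega

lemma choose_lt_card_nonDivisorSets_of_two_large {A : Finset ℕ} {S r x₁ x₂ : ℕ} (hS : S ≠ 0)
    (hr : 2 * (r + 2) ≤ #A) (hx₁ : x₁ ∈ A) (hx₂ : x₂ ∈ A) (hne : x₁ ≠ x₂)
    (hlarge₁ : 8 * S ≤ #A * x₁) (hlarge₂ : 8 * S ≤ #A * x₂) :
    (#A - 1).choose (r + 1) < #(nonDivisorSets S 0 (r + 2) A) := by
  have hx₂' : x₂ ∈ A.erase x₁ := mem_erase.2 ⟨hne.symm, hx₂⟩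
  have hcard₁ : #(A.erase x₁) = #A - 1 := card_erase_of_mem hx₁
  have hcard₂ : #((A.erase x₁).erase x₂) = #A - 2 := by
    rw [card_erase_of_mem hx₂', hcard₁, Nat.sub_sub]
  have hnd₁ : 3 * (#A - 1).choose (r + 1) ≤ 4 * #(nonDivisorSets S x₁ (r + 1) (A.erase x₁)) := by
    rw [← hcard₁]
    exact three_mul_choose_le_four_mul_card_nonDivisorSets hS (by omega) (by omega) hlarge₁
  have hnd₂ : 3 * (#A - 2).choose (r + 1) ≤
      4 * #(nonDivisorSets S x₂ (r + 1) ((A.erase x₁).erase x₂)) := by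
    rw [← hcard₂]
    exact three_mul_choose_le_four_mul_card_nonDivisorSets hS (by omega) (by omega) hlarge₂
  have hhalf : (#A - 1).choose (r + 1) ≤ 2 * (#A - 2).choose (r + 1) := by
    rw [show #A - 1 = #A - 2 + 1 by omega]
    exact choose_succ_le_two_mul_choose (by omega)
  have hpos : 0 < (#A - 1).choose (r + 1) := Nat.choose_pos (by omega)
  have hsplit₁ : #(nonDivisorSets S 0 (r + 2) A) = #(nonDivisorSets S 0 (r + 2) (A.erase x₁)) +
      #(nonDivisorSets S x₁ (r + 1) (A.erase x₁)) := by
    simpa only [insert_erase hx₁, zero_add] using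
      card_nonDivisorSets_succ_insert (notMem_erase x₁ A) S 0 (r + 1)
  have hsplit₂ : #(nonDivisorSets S 0 (r + 2) (A.erase x₁)) =
      #(nonDivisorSets S 0 (r + 2) ((A.erase x₁).erase x₂)) +
        #(nonDivisorSets S x₂ (r + 1) ((A.erase x₁).erase x₂)) := by
    simpa only [insert_erase hx₂', zero_add] using
      card_nonDivisorSets_succ_insert (notMem_erase x₂ (A.erase x₁)) S 0 (r + 1)
  omega

lemma card_filter_small_sum_lt {A A' : Finset ℕ} {S k : ℕ} (hk : 300 ≤ k) (hkA : k ≤ #A)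
    (hA' : A' ⊆ A) (hsmall : ∀ a ∈ A', #A * a ≤ 8 * S) (hsum : S < 2 * ∑ a ∈ A', a) :
    4 * #{B ∈ A.powersetCard k | #A * ∑ b ∈ B, b < 8 * S} < (#A).choose k := by
  have hn : (0 : ℝ) < #A := by exact_mod_cast (by omega : 0 < #A)
  have hC : (0 : ℝ) < (#A).choose k := by exact_mod_cast Nat.choose_pos hkA
  have hk' : (300 : ℝ) ≤ k := by exact_mod_cast hk
  set b : ℝ := 8 * S / #A
  set f : ℕ → ℝ := fun a => min a b
  have hb₀ : 0 ≤ b := by positivity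
  have hf_sum : (S : ℝ) < 2 * ∑ a ∈ A, f a := by
    calc (S : ℝ) < 2 * ∑ a ∈ A', (a : ℝ) := by rw [← Nat.cast_sum]; exact_mod_cast hsum
      _ = 2 * ∑ a ∈ A', f a := by
        rw [sum_congr rfl fun a ha => (min_eq_left ?_).symm]
        rw [le_div_iff₀' hn]
        exact_mod_cast hsmall a ha
      _ ≤ 2 * ∑ a ∈ A, f a := by
        gcongr
  set μ : ℝ := k * (∑ a ∈ A, f a) / #A
  have hμ_mul : k * ∑ a ∈ A, f a = μ * #A := (div_mul_cancel₀ _ hn.ne').symm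
  have hbμ : 75 * b < 4 * μ := by
    refine lt_of_mul_lt_mul_right ?_ hn.le
    have hbn : b * #A = 8 * S := div_mul_cancel₀ _ hn.ne'
    nlinarith
  have htail := card_filter_sum_le_half_mean_mul_le (by omega) hkA
    (fun a _ => le_min (Nat.cast_nonneg a) hb₀) (fun a _ => min_le_right (a : ℝ) b)
    (by linarith) hμ_mul
  have hsub : {B ∈ A.powersetCard k | #A * ∑ b ∈ B, b < 8 * S} ⊆
      {B ∈ A.powersetCard k | ∑ a ∈ B, f a ≤ μ / 2} := by
    refine monotone_filter_right _ fun B _ hB => ?_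
    calc ∑ a ∈ B, f a ≤ ∑ a ∈ B, (a : ℝ) := sum_le_sum fun a _ => min_le_left _ _
      _ ≤ b := by
        rw [le_div_iff₀' hn, ← Nat.cast_sum]
        exact_mod_cast hB.le
      _ ≤ μ / 2 := by linarith
  have hle : (#{B ∈ A.powersetCard k | #A * ∑ b ∈ B, b < 8 * S} : ℝ) ≤
      #{B ∈ A.powersetCard k | ∑ a ∈ B, f a ≤ μ / 2} := Nat.cast_le.2 (card_le_card hsub)
  have : (4 * #{B ∈ A.powersetCard k | #A * ∑ b ∈ B, b < 8 * S} : ℝ) < (#A).choose k := by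
    refine lt_of_mul_lt_mul_right ?_ (by linarith : 0 ≤ μ)
    nlinarith
  exact_mod_cast this

lemma card_divisorSets_lt_choose_of_small {A A' : Finset ℕ} {S k : ℕ} (hS : S ≠ 0) (hk : 300 ≤ k)
    (hkA : 2 * k ≤ #A) (hA' : A' ⊆ A) (hsmall : ∀ a ∈ A', #A * a ≤ 8 * S)
    (hsum : S < 2 * ∑ a ∈ A', a) :
    #(divisorSets S 0 k A) < (#A - 1).choose k := by
  obtain ⟨r, rfl⟩ : ∃ r, k = r + 1 := ⟨k - 1, by omega⟩
  have hlight := card_filter_small_sum_lt hk (by omega) hA' hsmall hsum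
  have hheavy := card_filter_large_divisorSets_le (U := A) (n := #A) (r := r) hS (by omega)
    (by omega) 0
  have hcover : #(divisorSets S 0 (r + 1) A) ≤
      #{B ∈ A.powersetCard (r + 1) | #A * ∑ b ∈ B, b < 8 * S} +
        #{D ∈ divisorSets S 0 (r + 1) A | 8 * S ≤ #A * (0 + ∑ d ∈ D, d)} := by
    rw [← card_filter_add_card_filter_not fun B : Finset ℕ => #A * ∑ b ∈ B, b < 8 * S]
    simp only [not_lt, zero_add]
    gcongr
    exact filter_subset _ _
  have hhalf : (#A).choose (r + 1) ≤ 2 * (#A - 1).choose (r + 1) := by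
    rw [show #A = #A - 1 + 1 by omega]
    exact choose_succ_le_two_mul_choose (by omega)
  omega

lemma three_mul_choose_le_twenty_mul_card_nonDivisorSets {U : Finset ℕ} {S x r : ℕ} (hS : S ≠ 0)
    (hx : 0 < x) (hUx : ∀ y ∈ U, y ≤ x) (hsum : 11 * S ≤ 24 * ∑ y ∈ U, y) (hr : r < 300)
    (hU : 6000 ≤ #U) :
    3 * (#U).choose (r + 1) ≤ 20 * #(nonDivisorSets S x (r + 1) U) := by
  have hcount : #(divisorSets S x (r + 1) U) * (#U - r : ℝ) ≤
      (4 / 5 * #U + 1) * (#U).choose (r + 1) :=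
    card_filter_sum_mul_le (P := fun d => d ∣ S) (by omega) fun D _ =>
      card_filter_add_dvd_le_of_le_sum hS hx (Nat.le_add_right x _) hUx hsum
  have hr' : (r : ℝ) < 300 := by exact_mod_cast hr
  have hU' : (6000 : ℝ) ≤ #U := by exact_mod_cast hU
  have hdensity : (4 / 5 * #U + 1 : ℝ) ≤ 17 / 20 * (#U - r) := by linarith
  have hbound := hcount.trans (mul_le_mul_of_nonneg_right hdensity (Nat.cast_nonneg _))
  have hdiv : (#(divisorSets S x (r + 1) U) : ℝ) ≤ 17 / 20 * (#U).choose (r + 1) :=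
    le_of_mul_le_mul_right (by linarith) (by linarith : (0 : ℝ) < #U - r)
  have htotal : (#(divisorSets S x (r + 1) U) + #(nonDivisorSets S x (r + 1) U) : ℝ) =
      (#U).choose (r + 1) := by
    exact_mod_cast card_divisorSets_add_card_nonDivisorSets S x (r + 1) U
  have : (3 * (#U).choose (r + 1) : ℝ) ≤ 20 * #(nonDivisorSets S x (r + 1) U) := by linarith
  exact_mod_cast this

lemma choose_lt_card_nonDivisorSets_of_small {A A' : Finset ℕ} {S r : ℕ} (hS : S ≠ 0)
    (hr : r < 300) (hA : 10000 ≤ #A) (hA' : A' ⊆ A) (hcard : #A' = #A - 1)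
    (hsmall : ∀ a ∈ A', #A * a ≤ 8 * S) (hsum : S < 2 * ∑ a ∈ A', a) :
    (#A - 1).choose (r + 1) < #(nonDivisorSets S 0 (r + 2) A) := by
  obtain ⟨T, hTA', hTcard, hTtop⟩ := exists_upper_subset_card_eq (A := A') (j := 10) (by omega)
  set U := A' \ T with hU
  have hUcard : #U = #A - 1 - 10 := by rw [hU, card_sdiff_of_subset hTA', hcard, hTcard]
  have hTsum : 10000 * ∑ x ∈ T, x ≤ 80 * S := by
    calc 10000 * ∑ x ∈ T, x ≤ #A * ∑ x ∈ T, x := Nat.mul_le_mul_right _ hA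
      _ = ∑ x ∈ T, #A * x := mul_sum _ _ _
      _ ≤ #T • (8 * S) := sum_le_card_nsmul _ _ _ fun x hx => hsmall x (hTA' hx)
      _ = 80 * S := by rw [hTcard, smul_eq_mul]; ring
  have hUsum : 11 * S ≤ 24 * ∑ y ∈ U, y := by
    have hsplit : ∑ y ∈ U, y + ∑ x ∈ T, x = ∑ a ∈ A', a := sum_sdiff hTA'
    omega
  have hUne : U.Nonempty := card_pos.1 (by omega)
  have hdense : ∀ x ∈ T, 3 * (#U).choose (r + 1) ≤ 20 * #(nonDivisorSets S x (r + 1) U) :=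
    fun x hx => three_mul_choose_le_twenty_mul_card_nonDivisorSets hS
      (Nat.zero_lt_of_lt (hTtop x hx _ hUne.choose_spec)) (fun y hy => (hTtop x hx y hy).le) hUsum
      hr (by omega)
  have htotal : 30 * (#U).choose (r + 1) ≤ 20 * #(nonDivisorSets S 0 (r + 2) A) := by
    calc 30 * (#U).choose (r + 1) = #T • (3 * (#U).choose (r + 1)) := by
          rw [hTcard, smul_eq_mul]; ring
      _ ≤ ∑ x ∈ T, 20 * #(nonDivisorSets S x (r + 1) U) := card_nsmul_le_sum _ _ _ hdense
      _ = 20 * ∑ x ∈ T, #(nonDivisorSets S (0 + x) (r + 1) U) := by simp only [mul_sum, zero_add]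
      _ ≤ 20 * #(nonDivisorSets S 0 (r + 2) (T ∪ U)) := by
          gcongr
          exact sum_card_nonDivisorSets_le disjoint_sdiff S 0 (r + 1)
      _ ≤ 20 * #(nonDivisorSets S 0 (r + 2) A) := by
          exact Nat.mul_le_mul_left 20 (card_nonDivisorSets_mono S 0 (r + 2)
            (union_subset (hTA'.trans hA') (sdiff_subset.trans hA')))
  have hloss := mul_choose_le_mul_choose_sub_add (#A - 1) 10 (r + 1)
  have hpos : 0 < (#A - 1).choose (r + 1) := Nat.choose_pos (by omega)
  rw [hUcard] at htotal
  obtain ⟨m, hm⟩ : ∃ m, #A - 1 = m + 9999 := ⟨#A - 10000, by omega⟩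
  rw [hm] at hloss hpos htotal ⊢
  nlinarith

lemma card_divisorSets_lt_choose_of_two_mul_le {A : Finset ℕ} {S k M : ℕ} (hS : ∑ a ∈ A, a = S)
    (hA : 10000 ≤ #A) (hk : 1 < k) (hkA : 2 * k ≤ #A) (hM : M ∈ A) (hmax : ∀ a ∈ A, a ≤ M)
    (hMS : 2 * M < S) :
    #(divisorSets S 0 k A) < (#A - 1).choose k := by
  have hS₀ : S ≠ 0 := by omega
  have hne : A.Nonempty := ⟨M, hM⟩
  obtain ⟨r, rfl⟩ : ∃ r, k = r + 2 := ⟨k - 2, by omega⟩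
  by_cases hlarge : ∃ x ∈ A.erase M, 8 * S ≤ #A * x
  · obtain ⟨x, hx, hxS⟩ := hlarge
    obtain ⟨hxM, hxA⟩ := mem_erase.1 hx
    exact card_divisorSets_lt_of_choose_lt hne <| choose_lt_card_nonDivisorSets_of_two_large hS₀
      hkA hxA hM hxM hxS (hxS.trans (Nat.mul_le_mul_left _ (hmax x hxA)))
  · push Not at hlarge
    have hsmall : ∀ a ∈ A.erase M, #A * a ≤ 8 * S := fun a ha => (hlarge a ha).le
    have hsum : S < 2 * ∑ a ∈ A.erase M, a := by
      have hsplit := add_sum_erase A (fun a => a) hM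
      omega
    rcases Nat.lt_or_ge r 300 with hr | hr
    · exact card_divisorSets_lt_of_choose_lt hne <| choose_lt_card_nonDivisorSets_of_small hS₀ hr
        hA (erase_subset M A) (card_erase_of_mem hM) hsmall hsum
    · exact card_divisorSets_lt_choose_of_small hS₀ (by omega) hkA (erase_subset M A) hsmall hsum

end SmallSets

section LargeSets

lemma sum_lt_sum_of_card_lt {A B : Finset ℕ} (hpos : ∀ a ∈ A, 0 < a) (hBA : B ⊆ A)
    (hcard : #B < #A) : ∑ b ∈ B, b < ∑ a ∈ A, a := by
  obtain ⟨x, hxA, hxB⟩ := exists_mem_notMem_of_card_lt_card hcard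
  exact sum_lt_sum_of_subset hBA hxA hxB (hpos x hxA) fun _ _ _ => Nat.zero_le _

lemma two_mul_sum_le_of_dvd {A B : Finset ℕ} (hpos : ∀ a ∈ A, 0 < a) (hBA : B ⊆ A)
    (hcard : #B < #A) (hdvd : ∑ b ∈ B, b ∣ ∑ a ∈ A, a) : 2 * ∑ b ∈ B, b ≤ ∑ a ∈ A, a := by
  have hlt := sum_lt_sum_of_card_lt hpos hBA hcard
  obtain ⟨c, hc⟩ := hdvd
  rw [hc] at hlt ⊢
  have hc₂ : 2 ≤ c := by
    by_contra! hc₂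
    interval_cases c <;> omega
  rw [mul_comm]
  exact Nat.mul_le_mul_left _ hc₂

/-- The `c`-element subsets `D` of `U` for which the shifted sum `s + ∑ D` is at least half
of `S`. -/
def heavySets (S s c : ℕ) (U : Finset ℕ) : Finset (Finset ℕ) :=
  {D ∈ U.powersetCard c | S ≤ 2 * (s + ∑ d ∈ D, d)}

lemma card_heavySets_le {S s c : ℕ} {U : Finset ℕ} (hc : 2 * c ≤ #U)
    (hsum : ∀ E ⊆ U, #E = 2 * c → ∑ e ∈ E, e + 2 * s < S) :
    #(heavySets S s c U) ≤ (#U - 1).choose (c - 1) := by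
  refine card_le_choose_of_intersecting (filter_subset _ _) (fun D hD D' hD' hdisj => ?_) hc
  obtain ⟨hDc, hDS⟩ := mem_filter.1 (mem_coe.1 hD)
  obtain ⟨hDc', hDS'⟩ := mem_filter.1 (mem_coe.1 hD')
  rw [mem_powersetCard] at hDc hDc'
  have hlight := hsum (D ∪ D') (union_subset hDc.1 hDc'.1) (by
    rw [card_union_of_disjoint hdisj, hDc.2, hDc'.2, two_mul])
  rw [sum_union hdisj] at hlight
  omega

lemma sum_add_two_mul_lt_of_min {U E : Finset ℕ} {S s m c : ℕ} (hU : 2 * (c + 1) < #U)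
    (hm : ∀ u ∈ U, m ≤ u)
    (hsum : ∀ E ⊆ U, #E = 2 * (c + 1) → ∑ e ∈ E, e + 2 * s < S) (hE : E ⊆ U)
    (hEc : #E = 2 * c) : ∑ e ∈ E, e + 2 * (s + m) < S := by
  obtain ⟨P, hPU, hPc⟩ := exists_subset_card_eq (s := U \ E) (n := 2) (by
    rw [card_sdiff_of_subset hE]; omega)
  have hdisj : Disjoint E P := disjoint_sdiff.mono_right hPU
  have hlight := hsum (E ∪ P) (union_subset hE (hPU.trans sdiff_subset)) (by
    rw [card_union_of_disjoint hdisj]; omega)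
  have hP : #P • m ≤ ∑ p ∈ P, p :=
    card_nsmul_le_sum _ _ _ fun p hp => hm p (sdiff_subset (hPU hp))
  rw [sum_union hdisj] at hlight
  rw [hPc, smul_eq_mul] at hP
  omega

lemma choose_le_card_heavySets_erase {S s c m : ℕ} {U : Finset ℕ} (hm : m ∈ U)
    (hU : 2 * (c + 2) < #U) (hsum : ∀ E ⊆ U, #E = 2 * (c + 2) → ∑ e ∈ E, e + 2 * s < S)
    (hheavy : (#U - 1).choose (c + 1) ≤ #(heavySets S s (c + 2) U)) :
    (#(U.erase m) - 1).choose c ≤ #(heavySets S (s + m) (c + 1) (U.erase m)) := by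
  have hcard : #(U.erase m) = #U - 1 := card_erase_of_mem hm
  have havoid : #(heavySets S s (c + 2) (U.erase m)) ≤ (#(U.erase m) - 1).choose (c + 1) :=
    card_heavySets_le (by omega) fun E hE hEc => hsum E (hE.trans (erase_subset m U)) hEc
  have hsplit : #(heavySets S s (c + 2) U) =
      #(heavySets S s (c + 2) (U.erase m)) + #(heavySets S (s + m) (c + 1) (U.erase m)) := by
    simpa only [insert_erase hm, heavySets] using
      card_filter_sum_powersetCard_succ_insert (notMem_erase m U) s (c + 1) fun w => S ≤ 2 * w
  have hpascal : (#U - 1).choose (c + 1) =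
      (#(U.erase m) - 1).choose c + (#(U.erase m) - 1).choose (c + 1) := by
    rw [← Nat.choose_succ_succ', ← hcard, Nat.sub_add_cancel (by omega)]
  omega

/-- Stability for `card_heavySets_le`. The induction absorbs the smallest element of `U` into the
shift `s`, where it bounds from below whichever element of `D` it stands for. -/
lemma le_two_mul_of_choose_le_card_heavySets {S d : ℕ} : ∀ {s M : ℕ} {U : Finset ℕ}, M ∈ U →
    (∀ u ∈ U, u ≤ M) → 2 * (d + 1) < #U →
    (∀ E ⊆ U, #E = 2 * (d + 1) → ∑ e ∈ E, e + 2 * s < S) →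
    (#U - 1).choose d ≤ #(heavySets S s (d + 1) U) →
    ∀ D ∈ (U.erase M).powersetCard d, S ≤ 2 * (s + M + ∑ x ∈ D, x) := by
  induction d with
  | zero =>
    intro s M U _ hmax _ _ hheavy D _
    obtain ⟨B, hB⟩ := card_pos.1 (hheavy.trans_lt' (by simp))
    obtain ⟨hBc, hBS⟩ := mem_filter.1 hB
    obtain ⟨hBU, hB₁⟩ := mem_powersetCard.1 hBc
    obtain ⟨x, rfl⟩ := card_eq_one.1 hB₁
    have hxM := hmax x (singleton_subset_iff.1 hBU)
    rw [sum_singleton] at hBS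
    omega
  | succ d ih =>
    intro s M U hM hmax hU hsum hheavy D hD
    obtain ⟨hDU, hDc⟩ := mem_powersetCard.1 hD
    obtain ⟨m, hmU, hmin⟩ : ∃ m ∈ U, ∀ u ∈ U, m ≤ u := U.exists_min_image id ⟨M, hM⟩
    obtain ⟨y, hyD, hymin⟩ : ∃ y ∈ D, ∀ x ∈ D, y ≤ x :=
      D.exists_min_image id (card_pos.1 (by omega))
    obtain ⟨hyM, hyU⟩ := mem_erase.1 (hDU hyD)
    have hmy : m ≤ y := hmin y hyU
    have hmM : m ≠ M := (hmy.trans_lt ((hmax y hyU).lt_of_ne hyM)).ne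
    have hDy : D.erase y ∈ ((U.erase m).erase M).powersetCard d := by
      refine mem_powersetCard.2 ⟨fun x hx => ?_, by rw [card_erase_of_mem hyD]; omega⟩
      obtain ⟨hxy, hxD⟩ := mem_erase.1 hx
      obtain ⟨hxM, hxU⟩ := mem_erase.1 (hDU hxD)
      exact mem_erase.2 ⟨hxM, mem_erase.2
        ⟨(hmy.trans_lt ((hymin x hxD).lt_of_ne hxy.symm)).ne', hxU⟩⟩
    have hstep : S ≤ 2 * (s + m + M + ∑ x ∈ D.erase y, x) :=
      ih (mem_erase.2 ⟨hmM.symm, hM⟩) (fun u hu => hmax u (mem_of_mem_erase hu))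
        (by rw [card_erase_of_mem hmU]; omega)
        (fun E hE hEc => sum_add_two_mul_lt_of_min hU hmin hsum (hE.trans (erase_subset m U)) hEc)
        (choose_le_card_heavySets_erase hmU hU hsum hheavy) _ hDy
    have hDsum : y + ∑ x ∈ D.erase y, x = ∑ x ∈ D, x := add_sum_erase D (fun x => x) hyD
    omega

lemma mul_add_mul_le_of_dvd {S d d' : ℕ} (hS : S ≠ 0) (hd : d ∣ S) (hd' : d' ∣ S) (hlt : d' < d) :
    d * d' + S * d' ≤ S * d := by
  obtain ⟨e, rfl⟩ := hd
  obtain ⟨e', he'⟩ := hd'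
  have hee' : e < e' := by
    by_contra! hle
    have he : 0 < e := Nat.pos_of_ne_zero (right_ne_zero_of_mul hS)
    nlinarith [Nat.mul_le_mul_left d' hle, Nat.mul_lt_mul_of_pos_right hlt he]
  calc d * d' + d * e * d' = d * (d' * (e + 1)) := by ring
    _ ≤ d * (d' * e') := by gcongr; exact hee'
    _ = d * e * d := by rw [← he']; ring

lemma card_mul_sum_le_of_swaps_dvd {S y : ℕ} {T : Finset ℕ} (hS : S ≠ 0) (hy : ∀ t ∈ T, y < t)
    (hT : ∑ t ∈ T, t ∣ S) (hswap : ∀ t ∈ T, ∑ x ∈ insert y (T.erase t), x ∣ S) :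
    #T * ∑ t ∈ T, t ≤ S + ∑ t ∈ T, t := by
  obtain ⟨w, hw⟩ : ∃ w, ∑ t ∈ T, t = w := ⟨_, rfl⟩
  rw [hw] at hT ⊢
  have hgap : ∀ t ∈ T, w * w ≤ (S + w) * t := by
    intro t ht
    have herase : t + ∑ x ∈ T.erase t, x = w := hw ▸ add_sum_erase T (fun x => x) ht
    have hyT : y ∉ T.erase t := fun h => (hy y (mem_of_mem_erase h)).false
    have hyt := hy t ht
    have hdvd := hswap t ht
    rw [sum_insert hyT] at hdvd
    nlinarith [mul_add_mul_le_of_dvd hS hT hdvd (by omega)]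
  have hsum : #T * w * w ≤ (S + w) * w := by
    calc #T * w * w = #T • (w * w) := by rw [smul_eq_mul, mul_assoc]
      _ ≤ ∑ t ∈ T, (S + w) * t := card_nsmul_le_sum _ _ _ hgap
      _ = (S + w) * w := by rw [← mul_sum, hw]
  rcases Nat.eq_zero_or_pos w with rfl | hw₀
  · simp
  · exact Nat.le_of_mul_le_mul_right hsum hw₀

lemma exists_mem_powersetCard_not_dvd {S k : ℕ} {Y : Finset ℕ} (hS : S ≠ 0) (hk : 5 ≤ k)
    (hkY : k < #Y) (hYk : #Y ≤ 2 * k) (hsum : S < 2 * ∑ y ∈ Y, y) :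
    ∃ B ∈ Y.powersetCard k, ¬ ∑ b ∈ B, b ∣ S := by
  by_contra! hdvd
  obtain ⟨T, hTY, hTc, hTtop⟩ := exists_upper_subset_card_eq hkY.le
  have hrest : #(Y \ T) = #Y - k := by rw [card_sdiff_of_subset hTY, hTc]
  obtain ⟨y, hy⟩ : (Y \ T).Nonempty := card_pos.1 (by omega)
  obtain ⟨hyY, hyT⟩ := mem_sdiff.1 hy
  have hswaps := card_mul_sum_le_of_swaps_dvd hS (fun t ht => hTtop t ht y hy)
    (hdvd T (mem_powersetCard.2 ⟨hTY, hTc⟩)) fun t ht => hdvd _ <| mem_powersetCard.2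
      ⟨insert_subset hyY ((erase_subset t T).trans hTY), by
        rw [card_insert_of_notMem fun h => hyT (mem_of_mem_erase h), card_erase_of_mem ht, hTc]
        omega⟩
  have hhalf : ∑ y ∈ Y \ T, y ≤ ∑ t ∈ T, t := by
    obtain ⟨t, ht, htmin⟩ := T.exists_min_image id (card_pos.1 (by omega))
    calc ∑ y ∈ Y \ T, y ≤ #(Y \ T) • t := sum_le_card_nsmul _ _ _ fun y hy => (hTtop t ht y hy).le
      _ ≤ #T • t := Nat.mul_le_mul_right t (by omega)
      _ ≤ ∑ t ∈ T, t := card_nsmul_le_sum _ _ _ htmin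
  have hsplit : ∑ y ∈ Y \ T, y + ∑ t ∈ T, t = ∑ y ∈ Y, y := sum_sdiff hTY
  rw [hTc] at hswaps
  nlinarith

lemma card_filter_two_mul_sum_le_eq {A : Finset ℕ} {k : ℕ} (hk : k ≤ #A) :
    #{B ∈ A.powersetCard k | 2 * ∑ b ∈ B, b ≤ ∑ a ∈ A, a} =
      #(heavySets (∑ a ∈ A, a) 0 (#A - k) A) := by
  refine card_nbij' (A \ ·) (A \ ·) (fun B hB => ?_) (fun D hD => ?_) (fun B hB => ?_)
    fun D hD => ?_
  · obtain ⟨hBc, hBS⟩ := mem_filter.1 hB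
    obtain ⟨hBA, hBk⟩ := mem_powersetCard.1 hBc
    have hsplit : ∑ a ∈ A \ B, a + ∑ b ∈ B, b = ∑ a ∈ A, a := sum_sdiff hBA
    exact mem_filter.2 ⟨mem_powersetCard.2 ⟨sdiff_subset, by rw [card_sdiff_of_subset hBA, hBk]⟩,
      by dsimp only; omega⟩
  · obtain ⟨hDc, hDS⟩ := mem_filter.1 hD
    obtain ⟨hDA, hDk⟩ := mem_powersetCard.1 hDc
    have hsplit : ∑ a ∈ A \ D, a + ∑ d ∈ D, d = ∑ a ∈ A, a := sum_sdiff hDA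
    exact mem_filter.2 ⟨mem_powersetCard.2
      ⟨sdiff_subset, by rw [card_sdiff_of_subset hDA]; omega⟩,
      by dsimp only; omega⟩
  · exact Finset.sdiff_sdiff_eq_self (mem_powersetCard.1 (mem_filter.1 hB).1).1
  · exact Finset.sdiff_sdiff_eq_self (mem_powersetCard.1 (mem_filter.1 hD).1).1

lemma card_filter_two_mul_sum_le_le_choose {A : Finset ℕ} {k : ℕ} (hpos : ∀ a ∈ A, 0 < a)
    (hkA : k < #A) (hAk : #A < 2 * k) :
    #{B ∈ A.powersetCard k | 2 * ∑ b ∈ B, b ≤ ∑ a ∈ A, a} ≤ (#A - 1).choose k := by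
  rw [card_filter_two_mul_sum_le_eq hkA.le,
    Nat.choose_symm_of_eq_add (by omega : #A - 1 = k + (#A - k - 1))]
  exact card_heavySets_le (by omega) fun E hEA hEc =>
    sum_lt_sum_of_card_lt hpos hEA (by omega)

lemma two_mul_sum_le_of_choose_le_card_filter {A : Finset ℕ} {k M : ℕ} (hpos : ∀ a ∈ A, 0 < a)
    (hkA : k < #A) (hAk : #A < 2 * k) (hM : M ∈ A) (hmax : ∀ a ∈ A, a ≤ M)
    (hlight : (#A - 1).choose k ≤ #{B ∈ A.powersetCard k | 2 * ∑ b ∈ B, b ≤ ∑ a ∈ A, a}) :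
    ∀ B ∈ (A.erase M).powersetCard k, 2 * ∑ b ∈ B, b ≤ ∑ a ∈ A, a := by
  intro B hB
  obtain ⟨hBM, hBk⟩ := mem_powersetCard.1 hB
  obtain ⟨d, hd⟩ : ∃ d, #A = k + d + 1 := ⟨#A - k - 1, by omega⟩
  have hcard : #(A.erase M \ B) = d := by
    rw [card_sdiff_of_subset hBM, card_erase_of_mem hM]; omega
  rw [card_filter_two_mul_sum_le_eq hkA.le, Nat.choose_symm_of_eq_add (by omega : #A - 1 = k + d),
    show #A - k = d + 1 by omega] at hlight
  have hheavy : ∑ a ∈ A, a ≤ 2 * (0 + M + ∑ a ∈ A.erase M \ B, a) :=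
    le_two_mul_of_choose_le_card_heavySets hM hmax (by omega)
      (fun E hEA hEc => sum_lt_sum_of_card_lt hpos hEA (by omega)) hlight _
      (mem_powersetCard.2 ⟨sdiff_subset, hcard⟩)
  have hsplit : ∑ a ∈ A.erase M \ B, a + ∑ b ∈ B, b = ∑ a ∈ A.erase M, a := sum_sdiff hBM
  have hsum : M + ∑ a ∈ A.erase M, a = ∑ a ∈ A, a := add_sum_erase A (fun a => a) hM
  omega

lemma card_divisorSets_lt_choose_of_lt_two_mul {A : Finset ℕ} {S k M : ℕ}
    (hpos : ∀ a ∈ A, 0 < a) (hS : ∑ a ∈ A, a = S) (hk : 5 ≤ k) (hkA : k < #A) (hAk : #A < 2 * k)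
    (hM : M ∈ A) (hmax : ∀ a ∈ A, a ≤ M) (hMS : 2 * M < S) :
    #(divisorSets S 0 k A) < (#A - 1).choose k := by
  by_contra! hmany
  have hsub : divisorSets S 0 k A ⊆ {B ∈ A.powersetCard k | 2 * ∑ b ∈ B, b ≤ ∑ a ∈ A, a} := by
    refine monotone_filter_right _ fun B hB hdvd => ?_
    obtain ⟨hBA, hBk⟩ := mem_powersetCard.1 hB
    rw [zero_add, ← hS] at hdvd
    exact two_mul_sum_le_of_dvd hpos hBA (hBk.trans_lt hkA) hdvd
  have heq := eq_of_subset_of_card_le hsub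
    ((card_filter_two_mul_sum_le_le_choose hpos hkA hAk).trans hmany)
  have hlight := two_mul_sum_le_of_choose_le_card_filter hpos hkA hAk hM hmax (heq ▸ hmany)
  have hcard : #(A.erase M) = #A - 1 := card_erase_of_mem hM
  have hsum : M + ∑ a ∈ A.erase M, a = ∑ a ∈ A, a := add_sum_erase A (fun a => a) hM
  rcases (by omega : k = #(A.erase M) ∨ k < #(A.erase M)) with hk' | hk'
  · have := hlight _ (mem_powersetCard.2 ⟨Subset.rfl, hk'.symm⟩)
    omega
  · obtain ⟨B, hB, hndvd⟩ := exists_mem_powersetCard_not_dvd (S := S) (Y := A.erase M)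
      (by omega) hk hk' (by omega) (by omega)
    have hBA := powersetCard_mono (erase_subset M A) hB
    have hBdiv : B ∈ divisorSets S 0 k A := heq ▸ mem_filter.2 ⟨hBA, hlight B hB⟩
    exact hndvd (by simpa only [zero_add] using (mem_filter.1 hBdiv).2)

end LargeSets

section AntiPencil

lemma dsk_one_eq_card_divisorSets (k : ℕ) (A : Finset ℕ) :
    dsk 1 k A = #(divisorSets (∑ a ∈ A, a) 0 k A) := by
  simp only [dsk, divisorSets, id, one_mul, zero_add]

lemma sum_le_two_mul_of_choose_le_dsk {A : Finset ℕ} {k M : ℕ} (hpos : ∀ a ∈ A, 0 < a)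
    (hA : 10000 ≤ #A) (hk : 1 < k) (hkA : k < #A) (hM : M ∈ A) (hmax : ∀ a ∈ A, a ≤ M)
    (hd : (#A - 1).choose k ≤ dsk 1 k A) : ∑ a ∈ A, a ≤ 2 * M := by
  by_contra! hMS
  rw [dsk_one_eq_card_divisorSets] at hd
  refine hd.not_gt ?_
  rcases Nat.lt_or_ge (#A) (2 * k) with hAk | hAk
  · exact card_divisorSets_lt_choose_of_lt_two_mul hpos rfl (by omega) hkA hAk hM hmax hMS
  · exact card_divisorSets_lt_choose_of_two_mul_le rfl hA hk hAk hM hmax hMS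

lemma notMem_of_sum_dvd {A B : Finset ℕ} {M : ℕ} (hpos : ∀ a ∈ A, 0 < a) (hBA : B ⊆ A)
    (hcard : #B < #A) (hB : 1 < #B) (hMS : ∑ a ∈ A, a ≤ 2 * M)
    (hdvd : ∑ b ∈ B, b ∣ ∑ a ∈ A, a) : M ∉ B := by
  intro hMB
  have hhalf := two_mul_sum_le_of_dvd hpos hBA hcard hdvd
  have hlt := sum_lt_sum_of_card_lt (fun b hb => hpos b (hBA hb))
    (singleton_subset_iff.2 hMB) (by rwa [card_singleton])
  rw [sum_singleton] at hlt
  omega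

theorem isAntiPencil_of_choose_le_dsk {A : Finset ℕ} {k : ℕ} (hpos : ∀ a ∈ A, 0 < a)
    (hA : 10000 ≤ #A) (hk : 1 < k) (hkA : k < #A) (hd : (#A - 1).choose k ≤ dsk 1 k A) :
    IsAntiPencil 1 k A := by
  have hne : A.Nonempty := card_pos.1 (by omega)
  have hM := A.max'_mem hne
  have hMS := sum_le_two_mul_of_choose_le_dsk hpos hA hk hkA hM (fun a ha => A.le_max' a ha) hd
  refine ⟨hne, eq_of_subset_of_card_le (fun B hB => ?_) ?_⟩
  · obtain ⟨hBc, hdvd⟩ := mem_filter.1 hB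
    obtain ⟨hBA, hBk⟩ := mem_powersetCard.1 hBc
    rw [one_mul] at hdvd
    have hMB := notMem_of_sum_dvd hpos hBA (hBk.trans_lt hkA) (hk.trans_eq hBk.symm) hMS hdvd
    exact mem_powersetCard.2 ⟨subset_erase.2 ⟨hBA, hMB⟩, hBk⟩
  · rwa [card_powersetCard, card_erase_of_mem hM]

end AntiPencil

end

/-- **Theorem 3 (s = 1 case).** For all but finitely many pairs `(k, n)` with `1 < k < n`,
any set `A` of `n` positive integers with `d_k(A) ≥ C(n-1, k)` is a `k`-anti-pencil. -/
theorem zbarsky_s1_case :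
    {p : ℕ × ℕ | 1 < p.1 ∧ p.1 < p.2 ∧
      ∃ A : Finset ℕ, (∀ a ∈ A, 0 < a) ∧ A.card = p.2 ∧
        (p.2 - 1).choose p.1 ≤ dsk 1 p.1 A ∧ ¬ IsAntiPencil 1 p.1 A}.Finite := by
  refine ((Set.finite_Iio 10000).prod (Set.finite_Iio 10000)).subset ?_
  rintro ⟨k, n⟩ ⟨hk, hkn, A, hpos, rfl, hd, hanti⟩
  have hn : A.card < 10000 := by
    by_contra! hn
    exact hanti (isAntiPencil_of_choose_le_dsk hpos hn hk hkn hd)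
  exact ⟨hkn.trans hn, hn⟩
end

section
/- Fix a positive integer s ≥ 1. Then d^s(k,n) = C(n-1,k) for all but finitely many pairs of integers (k,n) with 1 < k < n-1 (the number of exceptional pairs depending on s). Formally: the set of pairs (k,n) with 1 < k < n-1 such that d^s(k,n) ≠ C(n-1,k) is finite. -/
/-- `d^s(k, n)`: the maximum of `d^s_k(A)` over all sets `A` of `n` positive integers. -/
noncomputable def dsn (s k n : ℕ) : ℕ :=
  sSup {t : ℕ | ∃ A : Finset ℕ, (∀ a ∈ A, 0 < a) ∧ A.card = n ∧ dsk s k A = t}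

namespace SDivisor

open Finset

section SetFamilies

variable {α : Type*} [DecidableEq α] {A : Finset α}

theorem card_memberSubfamily (x : α) (F : Finset (Finset α)) :
    #(F.memberSubfamily x) = #{C ∈ F | x ∈ C} :=
  card_image_of_injOn <| (erase_injOn' x).mono fun _ hC ↦ (mem_filter.1 hC).2

theorem memberSubfamily_subset_powersetCard {F : Finset (Finset α)} {j : ℕ}
    (hF : F ⊆ A.powersetCard (j + 1)) (x : α) :
    F.memberSubfamily x ⊆ (A.erase x).powersetCard j := by
  intro R hR
  obtain ⟨hxR, hx⟩ := mem_memberSubfamily.1 hR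
  obtain ⟨hsub, hcard⟩ := mem_powersetCard.1 (hF hxR)
  rw [card_insert_of_notMem hx] at hcard
  exact mem_powersetCard.2
    ⟨subset_erase.2 ⟨(subset_insert x R).trans hsub, hx⟩, Nat.succ.inj hcard⟩

theorem sum_sum_eq_sum_card_memberSubfamily_mul {F : Finset (Finset α)}
    (hF : ∀ C ∈ F, C ⊆ A) (f : α → ℕ) :
    ∑ C ∈ F, ∑ x ∈ C, f x = ∑ x ∈ A, #(F.memberSubfamily x) * f x := by
  rw [sum_comm' (t' := A) (s' := fun x ↦ {C ∈ F | x ∈ C})]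
  · simp [card_memberSubfamily]
  · intro C x
    simp only [mem_filter]
    exact ⟨fun ⟨hC, hx⟩ ↦ ⟨⟨hC, hx⟩, hF C hC hx⟩, fun ⟨h, _⟩ ↦ h⟩

-- A weighted Markov inequality: count the pairs `x ∈ C ∈ F` with weight `f x`.
theorem mul_card_le_of_memberSubfamily_card_le {F : Finset (Finset α)} {f : α → ℕ}
    {c D p q : ℕ} (hA : 0 < ∑ x ∈ A, f x) (hF : ∀ C ∈ F, C ⊆ A)
    (hweight : ∀ C ∈ F, p * ∑ x ∈ A, f x ≤ q * ∑ x ∈ C, f x)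
    (hstar : ∀ x ∈ A, c * #(F.memberSubfamily x) ≤ D) :
    c * p * #F ≤ q * D := by
  refine Nat.le_of_mul_le_mul_right ?_ hA
  calc c * p * #F * ∑ x ∈ A, f x = c * (#F • (p * ∑ x ∈ A, f x)) := by rw [smul_eq_mul]; ring
    _ ≤ c * ∑ C ∈ F, q * ∑ x ∈ C, f x :=
        Nat.mul_le_mul_left c (card_nsmul_le_sum F _ _ hweight)
    _ = q * ∑ x ∈ A, c * #(F.memberSubfamily x) * f x := by
        rw [← mul_sum, sum_sum_eq_sum_card_memberSubfamily_mul hF, mul_left_comm, mul_sum]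
        simp only [mul_assoc]
    _ ≤ q * ∑ x ∈ A, D * f x :=
        Nat.mul_le_mul_left q (sum_le_sum fun x hx ↦ Nat.mul_le_mul_right _ (hstar x hx))
    _ = q * D * ∑ x ∈ A, f x := by rw [← mul_sum, mul_assoc]

theorem card_filter_powersetCard_eq_card_filter_sdiff {k m : ℕ} (hA : #A = k + m)
    (p : Finset α → Prop) [DecidablePred p] :
    #{B ∈ A.powersetCard k | p B} = #{C ∈ A.powersetCard m | p (A \ C)} := by
  have hsdiff {i j : ℕ} (hij : #A = i + j) {B : Finset α} (hB : B ∈ A.powersetCard i) :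
      A \ B ∈ A.powersetCard j ∧ A \ (A \ B) = B := by
    obtain ⟨hsub, hcard⟩ := mem_powersetCard.1 hB
    refine ⟨mem_powersetCard.2 ⟨sdiff_subset, ?_⟩, Finset.sdiff_sdiff_eq_self hsub⟩
    rw [card_sdiff_of_subset hsub]
    omega
  refine card_nbij' (A \ ·) (A \ ·) ?_ ?_ ?_ ?_
  · intro B hB
    obtain ⟨hB, hp⟩ := mem_filter.1 hB
    obtain ⟨hmem, heq⟩ := hsdiff hA hB
    exact mem_filter.2 ⟨hmem, by rwa [heq]⟩
  · intro C hC
    obtain ⟨hC, hp⟩ := mem_filter.1 hC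
    exact mem_filter.2 ⟨(hsdiff (hA.trans (add_comm k m)) hC).1, hp⟩
  · exact fun B hB ↦ (hsdiff hA (mem_filter.1 hB).1).2
  · exact fun C hC ↦ (hsdiff (hA.trans (add_comm k m)) (mem_filter.1 hC).1).2

theorem sum_card_filter_insert_le {X : Finset α} (hX : X ⊆ A) (j : ℕ)
    (p : Finset α → Prop) [DecidablePred p] :
    ∑ x ∈ X, #{R ∈ (A \ X).powersetCard j | p (insert x R)} ≤
      #{B ∈ A.powersetCard (j + 1) | p B} := by
  have hinter {x : α} {R : Finset α} (hx : x ∈ X) (hR : R ⊆ A \ X) :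
      insert x R ∩ X = {x} ∧ insert x R \ X = R := by
    have hdisj : Disjoint R X := disjoint_of_subset_left hR sdiff_disjoint
    rw [insert_inter_of_mem hx, disjoint_iff_inter_eq_empty.1 hdisj, insert_sdiff_of_mem R hx,
      sdiff_eq_self_of_disjoint hdisj]
    exact ⟨rfl, rfl⟩
  rw [← card_sigma]
  refine card_le_card_of_injOn (fun y ↦ insert y.1 y.2) ?_ ?_
  · rintro ⟨x, R⟩ hy
    simp only [coe_sigma, Set.mem_sigma_iff, mem_coe, mem_filter, mem_powersetCard] at hy ⊢
    obtain ⟨hx, ⟨hR, hcard⟩, hp⟩ := hy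
    have hxR : x ∉ R := fun h ↦ (mem_sdiff.1 (hR h)).2 hx
    exact ⟨⟨insert_subset (hX hx) (hR.trans sdiff_subset),
      by rw [card_insert_of_notMem hxR, hcard]⟩, hp⟩
  · rintro ⟨x, R⟩ hy ⟨x', R'⟩ hy' (heq : insert x R = insert x' R')
    simp only [coe_sigma, Set.mem_sigma_iff, mem_coe, mem_filter, mem_powersetCard] at hy hy'
    obtain ⟨hinter₁, hsdiff₁⟩ := hinter hy.1 hy.2.1.1
    obtain ⟨hinter₂, hsdiff₂⟩ := hinter hy'.1 hy'.2.1.1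
    obtain rfl : x = x' := singleton_injective (by rw [← hinter₁, ← hinter₂, heq])
    obtain rfl : R = R' := by rw [← hsdiff₁, ← hsdiff₂, heq]
    rfl

end SetFamilies

section SubsetSums

variable {M : Type*} [AddCancelCommMonoid M] {A : Finset M} {r : ℕ}

-- Deleting one element from a set of known sum loses no information: the deleted element is the
-- missing part of the sum. So the members of `F` have disjoint families of `r`-element subsets.
theorem card_mul_le_choose_of_sum_eq {F : Finset (Finset M)} {v : M}
    (hF : F ⊆ A.powersetCard (r + 1)) (hv : ∀ R ∈ F, ∑ a ∈ R, a = v) :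
    #F * (#A - r) ≤ (#A).choose (r + 1) := by
  classical
  have hdelete : #F * (r + 1) ≤ (#A).choose r := by
    rw [← card_powersetCard, ← smul_eq_mul, ← sum_const,
      ← sum_congr rfl fun R hR ↦ (mem_powersetCard.1 (hF hR)).2, ← card_sigma]
    refine card_le_card_of_injOn (fun y ↦ y.1.erase y.2) ?_ ?_
    · rintro ⟨R, x⟩ hy
      obtain ⟨hR, hx⟩ := mem_sigma.1 hy
      obtain ⟨hsub, hcard⟩ := mem_powersetCard.1 (hF hR)
      exact mem_powersetCard.2 ⟨(erase_subset x R).trans hsub, by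
        rw [card_erase_of_mem hx, hcard, Nat.add_sub_cancel]⟩
    · rintro ⟨R, x⟩ hy ⟨R', x'⟩ hy' (heq : R.erase x = R'.erase x')
      obtain ⟨hR, hx⟩ : R ∈ F ∧ x ∈ R := mem_sigma.1 hy
      obtain ⟨hR', hx'⟩ : R' ∈ F ∧ x' ∈ R' := mem_sigma.1 hy'
      have hsum : x + ∑ a ∈ R.erase x, a = x' + ∑ a ∈ R.erase x, a := by
        rw [add_sum_erase R (fun a ↦ a) hx, hv R hR, heq, add_sum_erase R' (fun a ↦ a) hx',
          hv R' hR']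
      obtain rfl : x = x' := add_right_cancel hsum
      obtain rfl : R = R' := by rw [← insert_erase hx, heq, insert_erase hx']
      rfl
  refine Nat.le_of_mul_le_mul_right ?_ r.succ_pos
  calc #F * (#A - r) * (r + 1) = #F * (r + 1) * (#A - r) := mul_right_comm _ _ _
    _ ≤ (#A).choose r * (#A - r) := Nat.mul_le_mul_right _ hdelete
    _ = (#A).choose (r + 1) * (r + 1) := (Nat.choose_succ_right_eq _ _).symm

theorem card_mul_le_card_image_sum_mul_choose [DecidableEq M] {F : Finset (Finset M)}
    (hF : F ⊆ A.powersetCard (r + 1)) :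
    #F * (#A - r) ≤ #(F.image fun R ↦ ∑ a ∈ R, a) * (#A).choose (r + 1) := by
  rw [card_eq_sum_card_image (fun R ↦ ∑ a ∈ R, a) F, sum_mul, ← smul_eq_mul]
  exact sum_le_card_nsmul _ _ _ fun v _ ↦
    card_mul_le_choose_of_sum_eq ((filter_subset _ F).trans hF) fun R hR ↦ (mem_filter.1 hR).2

-- The weighted Markov inequality reduces this to the stars of `F`; the star of `x`, with `x`
-- deleted, consists of `(r + 1)`-element subsets of `A.erase x`.
theorem card_mul_le_card_image_sum_mul_choose_pred {A : Finset ℕ} {q : ℕ}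
    {F : Finset (Finset ℕ)} (hA : 0 < ∑ a ∈ A, a) (hF : F ⊆ A.powersetCard (r + 2))
    (hlarge : ∀ C ∈ F, ∑ a ∈ A, a ≤ q * ∑ a ∈ C, a) :
    (#A - 1 - r) * #F ≤
      q * (#(F.image fun C ↦ ∑ a ∈ C, a) * (#A - 1).choose (r + 1)) := by
  rw [← mul_one (#A - 1 - r)]
  refine mul_card_le_of_memberSubfamily_card_le hA (fun C hC ↦ (mem_powersetCard.1 (hF hC)).1)
    (by simpa only [one_mul] using hlarge) fun x hx ↦ ?_
  have hstar := card_mul_le_card_image_sum_mul_choose (memberSubfamily_subset_powersetCard hF x)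
  have himage : #((F.memberSubfamily x).image fun R ↦ ∑ a ∈ R, a) ≤
      #(F.image fun C ↦ ∑ a ∈ C, a) := by
    refine card_le_card_of_injOn (x + ·) ?_ (add_right_injective x).injOn
    intro v hv
    obtain ⟨R, hR, rfl⟩ := mem_image.1 hv
    obtain ⟨hxR, hx⟩ := mem_memberSubfamily.1 hR
    exact mem_image.2 ⟨insert x R, hxR, sum_insert hx⟩
  rw [card_erase_of_mem hx] at hstar
  rw [mul_comm]
  exact hstar.trans (Nat.mul_le_mul_right _ himage)

end SubsetSums

section Arithmetic

theorem mul_le_of_mul_le_mul_of_mul_le {g c m D N : ℕ} (hc : 0 < c) (hg : g * c ≤ D * N)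
    (hm : m * D ≤ c) : m * g ≤ N := by
  refine Nat.le_of_mul_le_mul_right ?_ hc
  calc m * g * c = m * (g * c) := mul_assoc m g c
    _ ≤ m * (D * N) := Nat.mul_le_mul_left m hg
    _ = m * D * N := (mul_assoc m D N).symm
    _ ≤ c * N := Nat.mul_le_mul_right N hm
    _ = N * c := mul_comm c N

theorem mul_choose_succ_left_le {a n j : ℕ} (h : (a + 1) * j ≤ n + 1) :
    a * (n + 1).choose j ≤ (a + 1) * n.choose j := by
  refine Nat.le_of_mul_le_mul_right ?_ n.succ_pos
  calc a * (n + 1).choose j * (n + 1) = (n + 1).choose j * (a * (n + 1)) := by ring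
    _ ≤ (n + 1).choose j * ((a + 1) * (n + 1 - j)) := by
        refine Nat.mul_le_mul_left _ ?_
        rw [Nat.mul_sub]
        exact Nat.le_sub_of_add_le (by linarith)
    _ = (a + 1) * ((n + 1).choose j * (n + 1 - j)) := by ring
    _ = (a + 1) * n.choose j * (n + 1) := by rw [← Nat.choose_mul_succ_eq, mul_assoc]

theorem mul_choose_le_mul_choose_succ_succ {p q n j : ℕ} (h : p * (j + 1) ≤ q * (n + 1)) :
    p * n.choose j ≤ q * (n + 1).choose (j + 1) := by
  refine Nat.le_of_mul_le_mul_left ?_ n.succ_pos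
  calc (n + 1) * (p * n.choose j) = p * ((n + 1) * n.choose j) := Nat.mul_left_comm _ _ _
    _ = p * (j + 1) * (n + 1).choose (j + 1) := by rw [Nat.add_one_mul_choose_eq]; ring
    _ ≤ q * (n + 1) * (n + 1).choose (j + 1) := Nat.mul_le_mul_right _ h
    _ = (n + 1) * (q * (n + 1).choose (j + 1)) := by ring

end Arithmetic

section Divisors

theorem succ_mul_le_of_dvd_mul_of_lt {s u S : ℕ} (hs : 0 < s) (hu : u ∣ s * S) (huS : u < S) :
    (s + 1) * u ≤ s * S := by
  obtain ⟨m, hm⟩ := hu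
  have hsm : s < m := by
    refine lt_of_mul_lt_mul_left ?_ u.zero_le
    calc u * s < S * s := Nat.mul_lt_mul_of_pos_right huS hs
      _ = u * m := by rw [mul_comm, hm]
  calc (s + 1) * u ≤ m * u := Nat.mul_le_mul_right u hsm
    _ = s * S := by rw [mul_comm, hm]

theorem card_le_of_forall_dvd_of_div_le {W m : ℕ} (hW : 0 < W) {U : Finset ℕ}
    (hdvd : ∀ u ∈ U, u ∣ W) (hdiv : ∀ u ∈ U, W / u ≤ m) : #U ≤ m := by
  have hIcc : ∀ u ∈ U, W / u ∈ Icc 1 m := fun u hu ↦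
    mem_Icc.2 ⟨Nat.div_pos (Nat.le_of_dvd hW (hdvd u hu)) (Nat.pos_of_dvd_of_pos (hdvd u hu) hW),
      hdiv u hu⟩
  have hinj : Set.InjOn (W / ·) U := fun u hu u' hu' (heq : W / u = W / u') ↦ by
    rw [← Nat.div_div_self (hdvd u hu) hW.ne', heq, Nat.div_div_self (hdvd u' hu') hW.ne']
  simpa using card_le_card_of_injOn (W / ·) hIcc hinj

theorem card_le_div_of_forall_add_dvd {W x : ℕ} (hW : 0 < W) (hx : 0 < x) {T : Finset ℕ}
    (hT : ∀ t ∈ T, x + t ∣ W) : #T ≤ W / x := by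
  rw [← card_map (addLeftEmbedding x)]
  refine card_le_of_forall_dvd_of_div_le hW ?_ ?_ <;> intro u hu <;>
    obtain ⟨t, ht, rfl⟩ := mem_map.1 hu
  · exact hT t ht
  · exact Nat.div_le_div_left (Nat.le_add_right x t) hx

theorem mul_eq_div_sub_div_mul {W u v : ℕ} (hu : u ∣ W) (hv : v ∣ W) :
    W * (v - u) = (W / u - W / v) * (u * v) := by
  have hu' := Nat.div_mul_cancel hu
  have hv' := Nat.div_mul_cancel hv
  rw [Nat.mul_sub, Nat.sub_mul]
  congr 1
  · rw [← mul_assoc, hu']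
  · rw [mul_comm u v, ← mul_assoc, hv']

-- The difference of the cofactors of `x + t` and `y + t` lies in `[1, D]` and determines `t`.
theorem card_le_of_forall_add_dvd_and_add_dvd {W x y D : ℕ} (hW : 0 < W) (hx : 0 < x)
    (hxy : x < y) (hD : (y - x) * W ≤ D * x ^ 2) {T : Finset ℕ}
    (hT : ∀ t ∈ T, x + t ∣ W ∧ y + t ∣ W) : #T ≤ D := by
  set e : ℕ → ℕ := fun t ↦ W / (x + t) - W / (y + t)
  have hpos : 0 < W * (y - x) := Nat.mul_pos hW (Nat.sub_pos_of_lt hxy)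
  have he : ∀ t ∈ T, W * (y - x) = e t * ((x + t) * (y + t)) := fun t ht ↦ by
    rw [← mul_eq_div_sub_div_mul (hT t ht).1 (hT t ht).2, Nat.add_sub_add_right]
  have hepos : ∀ t ∈ T, 0 < e t := fun t ht ↦
    Nat.pos_of_ne_zero fun h ↦ by simp [he t ht, h] at hpos
  have hIcc : ∀ t ∈ T, e t ∈ Icc 1 D := fun t ht ↦ by
    refine mem_Icc.2 ⟨hepos t ht, Nat.le_of_mul_le_mul_right ?_ (pow_pos hx 2)⟩
    calc e t * x ^ 2 ≤ e t * ((x + t) * (y + t)) := by rw [sq]; gcongr <;> omega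
      _ = (y - x) * W := by rw [← he t ht, mul_comm]
      _ ≤ D * x ^ 2 := hD
  have hmono : StrictMono fun t ↦ (x + t) * (y + t) := fun t t' htt' ↦
    Nat.mul_lt_mul'' (Nat.add_lt_add_left htt' x) (Nat.add_lt_add_left htt' y)
  have hinj : Set.InjOn e T := fun t ht t' ht' heq ↦ by
    refine hmono.injective (Nat.eq_of_mul_eq_mul_left (hepos t ht) ?_)
    rw [← he t ht, he t' ht', heq]
  simpa using card_le_card_of_injOn e hIcc hinj

end Divisors

/-- The `k`-element subsets of `A` whose sum divides `W`. For `W = s * ∑ a ∈ A, a` these are the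
`k`-element `s`-divisors of `A`, see `dsk`. -/
def divisorSets (W k : ℕ) (A : Finset ℕ) : Finset (Finset ℕ) :=
  {B ∈ A.powersetCard k | ∑ b ∈ B, b ∣ W}

/-- The `j`-element subsets `R` of `E` for which adding `x` (an element outside `E`) gives a set
whose sum does not divide `W`. -/
def nondivisorLink (W x j : ℕ) (E : Finset ℕ) : Finset (Finset ℕ) :=
  {R ∈ E.powersetCard j | ¬ x + ∑ a ∈ R, a ∣ W}

section Links

variable {W j r : ℕ} {A E X : Finset ℕ}

-- Pascal's rule: it suffices to exhibit `(#A - 1).choose j` sets whose sum does not divide `W`.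
theorem card_divisorSets_le_of_le_sum_card_nondivisorLink (hA : 0 < #A) (hX : X ⊆ A)
    (h : (#A - 1).choose j ≤ ∑ x ∈ X, #(nondivisorLink W x j (A \ X))) :
    #(divisorSets W (j + 1) A) ≤ (#A - 1).choose (j + 1) := by
  have hlink : ∀ x ∈ X, #(nondivisorLink W x j (A \ X)) =
      #{R ∈ (A \ X).powersetCard j | ¬ ∑ b ∈ insert x R, b ∣ W} := fun x hx ↦ by
    refine congrArg card (filter_congr fun R hR ↦ ?_)
    rw [sum_insert fun hxR ↦ (mem_sdiff.1 ((mem_powersetCard.1 hR).1 hxR)).2 hx]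
  rw [sum_congr rfl hlink] at h
  have hnondivisors := h.trans (sum_card_filter_insert_le hX j fun B ↦ ¬ ∑ b ∈ B, b ∣ W)
  have htotal := card_filter_add_card_filter_not (s := A.powersetCard (j + 1))
    fun B ↦ ∑ b ∈ B, b ∣ W
  have hpascal := Nat.choose_succ_succ (#A - 1) j
  rw [card_powersetCard] at htotal
  simp only [Nat.succ_eq_add_one, Nat.sub_add_cancel hA] at hpascal
  change #(divisorSets W (j + 1) A) + _ = _ at htotal
  omega

theorem card_mul_le_of_forall_add_sum_dvd {x : ℕ} (hW : 0 < W) (hx : 0 < x) :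
    #{R ∈ E.powersetCard (r + 1) | x + ∑ a ∈ R, a ∣ W} * (#E - r) ≤
      W / x * (#E).choose (r + 1) := by
  refine (card_mul_le_card_image_sum_mul_choose (filter_subset _ _)).trans
    (Nat.mul_le_mul_right _ (card_le_div_of_forall_add_dvd hW hx fun t ht ↦ ?_))
  obtain ⟨R, hR, rfl⟩ := mem_image.1 ht
  exact (mem_filter.1 hR).2

theorem card_mul_le_of_forall_add_sum_dvd_and_add_sum_dvd {x y D : ℕ} (hW : 0 < W) (hx : 0 < x)
    (hxy : x < y) (hD : (y - x) * W ≤ D * x ^ 2) :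
    #{R ∈ E.powersetCard (r + 1) | x + ∑ a ∈ R, a ∣ W ∧ y + ∑ a ∈ R, a ∣ W} * (#E - r) ≤
      D * (#E).choose (r + 1) := by
  refine (card_mul_le_card_image_sum_mul_choose (filter_subset _ _)).trans
    (Nat.mul_le_mul_right _ (card_le_of_forall_add_dvd_and_add_dvd hW hx hxy hD fun t ht ↦ ?_))
  obtain ⟨R, hR, rfl⟩ := mem_image.1 ht
  exact (mem_filter.1 hR).2

theorem mul_choose_le_card_nondivisorLink {x c : ℕ} (hW : 0 < W) (hx : 0 < x) (hr : r < #E)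
    (hc : (c + 1) * (W / x) ≤ #E - r) :
    c * (#E).choose (r + 1) ≤ (c + 1) * #(nondivisorLink W x (r + 1) E) := by
  have htotal := card_filter_add_card_filter_not (s := E.powersetCard (r + 1))
    fun R ↦ x + ∑ a ∈ R, a ∣ W
  have hdvd := mul_le_of_mul_le_mul_of_mul_le (Nat.sub_pos_of_lt hr)
    (card_mul_le_of_forall_add_sum_dvd (E := E) (r := r) hW hx) hc
  rw [card_powersetCard] at htotal
  rw [nondivisorLink]
  linarith [congrArg ((c + 1) * ·) htotal]

theorem mul_choose_le_card_nondivisorLink_add_card_nondivisorLink {x y c D : ℕ} (hW : 0 < W)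
    (hx : 0 < x) (hxy : x < y) (hD : (y - x) * W ≤ D * x ^ 2) (hr : r < #E)
    (hc : (c + 1) * D ≤ #E - r) :
    c * (#E).choose (r + 1) ≤
      (c + 1) * (#(nondivisorLink W x (r + 1) E) + #(nondivisorLink W y (r + 1) E)) := by
  have htotal := card_filter_add_card_filter_not (s := E.powersetCard (r + 1))
    fun R ↦ x + ∑ a ∈ R, a ∣ W ∧ y + ∑ a ∈ R, a ∣ W
  have hdvd := mul_le_of_mul_le_mul_of_mul_le (Nat.sub_pos_of_lt hr)
    (card_mul_le_of_forall_add_sum_dvd_and_add_sum_dvd (E := E) (r := r) hW hx hxy hD) hc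
  have hunion := card_union_le (nondivisorLink W x (r + 1) E) (nondivisorLink W y (r + 1) E)
  simp only [nondivisorLink, ← filter_or, ← not_and_or] at hunion ⊢
  rw [card_powersetCard] at htotal
  linarith [congrArg ((c + 1) * ·) htotal, Nat.mul_le_mul_left (c + 1) hunion]

end Links

section FewElements

theorem exists_subset_card_eq_forall_sub_mul_le {α : Type*} {Y : Finset α}
    {f : α → ℕ} {H L m : ℕ} (hf : ∀ y ∈ Y, f y ≤ H) (hL : 0 < L) (hm : L * m < #Y) :
    ∃ X ⊆ Y, #X = m + 1 ∧ ∀ x ∈ X, ∀ y ∈ X, (f y - f x) * L ≤ H := by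
  have hbin : ∀ y ∈ Y, f y * L / (H + 1) ∈ range L := fun y hy ↦ by
    rw [mem_range, Nat.div_lt_iff_lt_mul H.succ_pos]
    calc f y * L ≤ H * L := Nat.mul_le_mul_right L (hf y hy)
      _ < L * (H + 1) := by linarith
  obtain ⟨b, -, hb⟩ :=
    exists_lt_card_fiber_of_mul_lt_card_of_maps_to hbin (by rwa [card_range])
  obtain ⟨X, hX, hcard⟩ := exists_subset_card_eq hb
  refine ⟨X, hX.trans (filter_subset _ _), hcard, fun x hx y hy ↦ ?_⟩
  have hxb := (mem_filter.1 (hX hx)).2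
  have hyb := (mem_filter.1 (hX hy)).2
  have hyx : f y * L < f x * L + (H + 1) := by
    have hx_le := Nat.div_mul_le_self (f x * L) (H + 1)
    have hy_lt := Nat.lt_div_mul_add (a := f y * L) (b := H + 1) H.succ_pos
    rw [hxb] at hx_le
    rw [hyb] at hy_lt
    omega
  rw [Nat.sub_mul]
  omega

theorem le_mul_card_filter_of_le_mul_sum {T : Finset ℕ} {W n q c : ℕ} (hW : 0 < W) (hn : 0 < n)
    (hT : #T ≤ n) (hsum : W ≤ q * ∑ x ∈ T, x) (hle : ∀ x ∈ T, n * x ≤ c * W) :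
    n ≤ 2 * q * c * #{x ∈ T | W ≤ 2 * q * n * x} := by
  set Y := {x ∈ T | W ≤ 2 * q * n * x}
  set Z := {x ∈ T | ¬ W ≤ 2 * q * n * x}
  have hZ : n * (2 * q * ∑ x ∈ Z, x) ≤ n * W := by
    calc n * (2 * q * ∑ x ∈ Z, x) = ∑ x ∈ Z, 2 * q * n * x := by rw [← mul_sum]; ring
      _ ≤ #Z • W := sum_le_card_nsmul _ _ _ fun x hx ↦ (not_le.1 (mem_filter.1 hx).2).le
      _ ≤ n * W := Nat.mul_le_mul_right W ((card_filter_le _ _).trans hT)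
  have hY : W ≤ 2 * q * ∑ x ∈ Y, x := by
    have hsplit : ∑ x ∈ Y, x + ∑ x ∈ Z, x = ∑ x ∈ T, x := sum_filter_add_sum_filter_not T _ _
    have hZ' := Nat.le_of_mul_le_mul_left hZ hn
    rw [← hsplit] at hsum
    linarith
  refine Nat.le_of_mul_le_mul_right ?_ hW
  calc n * W ≤ n * (2 * q * ∑ x ∈ Y, x) := Nat.mul_le_mul_left n hY
    _ = 2 * q * ∑ x ∈ Y, n * x := by rw [← mul_sum]; ring
    _ ≤ 2 * q * (#Y • (c * W)) :=
        Nat.mul_le_mul_left _ (sum_le_card_nsmul _ _ _ fun x hx ↦ hle x (mem_filter.1 hx).1)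
    _ = 2 * q * c * #Y * W := by rw [smul_eq_mul]; ring

theorem exists_close_triple {Y : Finset ℕ} {W n q c : ℕ} (hn : 0 < n)
    (hupper : ∀ y ∈ Y, n * y ≤ c * W) (hlower : ∀ y ∈ Y, W ≤ 2 * q * n * y)
    (hcard : n ≤ 2 * q * c * #Y) (hthree : 3 ≤ #Y) :
    ∃ X ⊆ Y, #X = 3 ∧ ∀ x ∈ X, ∀ y ∈ X, (y - x) * W ≤ 32 * c ^ 2 * q ^ 3 * x ^ 2 := by
  obtain ⟨X, hXY, hX, hclose⟩ := exists_subset_card_eq_forall_sub_mul_le (L := (#Y - 1) / 2)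
    (m := 2) hupper (by omega) (by omega)
  refine ⟨X, hXY, hX, fun x hx y hy ↦ ?_⟩
  have hgap : n * (y - x) * #Y ≤ 4 * c * W := by
    calc n * (y - x) * #Y ≤ n * (y - x) * ((#Y - 1) / 2 * 4) :=
          Nat.mul_le_mul_left _ (by omega)
      _ = (n * y - n * x) * ((#Y - 1) / 2) * 4 := by rw [← Nat.mul_sub, mul_assoc _ _ 4]
      _ ≤ c * W * 4 := Nat.mul_le_mul_right 4 (hclose x hx y hy)
      _ = 4 * c * W := by ring
  refine Nat.le_of_mul_le_mul_left ?_ (pow_pos hn 2)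
  calc n ^ 2 * ((y - x) * W) = n * (y - x) * W * n := by ring
    _ ≤ n * (y - x) * W * (2 * q * c * #Y) := Nat.mul_le_mul_left _ hcard
    _ = 2 * q * c * W * (n * (y - x) * #Y) := by ring
    _ ≤ 2 * q * c * W * (4 * c * W) := Nat.mul_le_mul_left _ hgap
    _ = 8 * q * c ^ 2 * (W * W) := by ring
    _ ≤ 8 * q * c ^ 2 * ((2 * q * n * x) * (2 * q * n * x)) :=
        Nat.mul_le_mul_left _ (Nat.mul_le_mul (hlower x (hXY hx)) (hlower x (hXY hx)))
    _ = n ^ 2 * (32 * c ^ 2 * q ^ 3 * x ^ 2) := by ring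

variable {W r : ℕ} {A : Finset ℕ}

theorem card_divisorSets_le_of_two_large (hW : 0 < W) (hr : 12 * (r + 2) ≤ #A) {x y : ℕ}
    (hx : x ∈ A) (hy : y ∈ A) (hxy : x ≠ y) (hxW : 8 * W < #A * x) (hyW : 8 * W < #A * y) :
    #(divisorSets W (r + 2) A) ≤ (#A - 1).choose (r + 2) := by
  have hX : ({x, y} : Finset ℕ) ⊆ A := by simp [insert_subset_iff, hx, hy]
  have hcard : #(A \ {x, y}) = #A - 2 := by rw [card_sdiff_of_subset hX, card_pair hxy]
  have hlink : ∀ z, 8 * W < #A * z → 3 * (#A - 2).choose (r + 1) ≤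
      4 * #(nondivisorLink W z (r + 1) (A \ {x, y})) := fun z hz ↦ by
    have hz0 : 0 < z := Nat.pos_of_ne_zero (by rintro rfl; simp at hz)
    have hdiv : 8 * (W / z) ≤ #A := by
      refine Nat.le_of_mul_le_mul_right ?_ hz0
      linarith [Nat.div_mul_le_self W z]
    rw [← hcard]
    exact mul_choose_le_card_nondivisorLink hW hz0 (by omega) (by omega)
  have hratio := mul_choose_succ_left_le (a := 11) (n := #A - 2) (j := r + 1) (by omega)
  rw [show #A - 2 + 1 = #A - 1 by omega] at hratio
  refine card_divisorSets_le_of_le_sum_card_nondivisorLink (by omega) hX ?_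
  rw [sum_pair hxy]
  linarith [hlink x hxW, hlink y hyW]

-- For two elements of `X`, few `R` give two sets with sum dividing `W`. Adding up the three pairs
-- yields `5 / 4 * (#A - 3).choose (r + 1)` nondivisors, and `5 / 4 > (12 / 11) ^ 2`.
theorem card_divisorSets_le_of_close_triple {X : Finset ℕ} {D : ℕ} (hW : 0 < W)
    (hpos : ∀ a ∈ A, 0 < a) (hr : 12 * (r + 2) ≤ #A) (hXA : X ⊆ A) (hX : #X = 3)
    (hclose : ∀ x ∈ X, ∀ y ∈ X, (y - x) * W ≤ D * x ^ 2) (hD : 6 * D ≤ #A - 3 - r) :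
    #(divisorSets W (r + 2) A) ≤ (#A - 1).choose (r + 2) := by
  have hcard : #(A \ X) = #A - 3 := by rw [card_sdiff_of_subset hXA, hX]
  have hpair : ∀ x ∈ X, ∀ y ∈ X, x ≠ y → 5 * (#A - 3).choose (r + 1) ≤
      6 * (#(nondivisorLink W x (r + 1) (A \ X)) + #(nondivisorLink W y (r + 1) (A \ X))) := by
    intro x hx y hy hxy
    wlog hlt : x < y generalizing x y
    · rw [add_comm #(nondivisorLink W x _ _)]
      exact this y hy x hx hxy.symm (by omega)
    rw [← hcard] at hD ⊢
    exact mul_choose_le_card_nondivisorLink_add_card_nondivisorLink hW (hpos x (hXA hx)) hlt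
      (hclose x hx y hy) (by omega) hD
  have hratio₃ := mul_choose_succ_left_le (a := 11) (n := #A - 3) (j := r + 1) (by omega)
  have hratio₂ := mul_choose_succ_left_le (a := 11) (n := #A - 2) (j := r + 1) (by omega)
  rw [show #A - 3 + 1 = #A - 2 by omega] at hratio₃
  rw [show #A - 2 + 1 = #A - 1 by omega] at hratio₂
  refine card_divisorSets_le_of_le_sum_card_nondivisorLink (by omega) hXA ?_
  obtain ⟨x, y, z, hxy, hxz, hyz, hXeq⟩ := card_eq_three.1 hX
  have hsum : ∑ a ∈ X, #(nondivisorLink W a (r + 1) (A \ X)) =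
      #(nondivisorLink W x (r + 1) (A \ X)) + (#(nondivisorLink W y (r + 1) (A \ X)) +
        #(nondivisorLink W z (r + 1) (A \ X))) := by
    conv_lhs => rw [hXeq]
    rw [sum_insert (by simp [hxy, hxz]), sum_pair hyz, ← hXeq]
  have hxX : x ∈ X := by simp [hXeq]
  have hyX : y ∈ X := by simp [hXeq]
  have hzX : z ∈ X := by simp [hXeq]
  linarith [hpair x hxX y hyX hxy, hpair x hxX z hzX hxz, hpair y hyX z hzX hyz]

theorem sum_le_mul_sum_filter {p : ℕ → Prop} [DecidablePred p] {c : ℕ}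
    (hc : 0 < c) (hA : ∀ a ∈ A, ∑ x ∈ A, x ≤ c * ∑ x ∈ A.erase a, x)
    (hp : ∀ x ∈ A, ∀ y ∈ A, ¬ p x → ¬ p y → x = y) :
    ∑ x ∈ A, x ≤ c * ∑ x ∈ A with p x, x := by
  by_cases hall : ∀ a ∈ A, p a
  · rw [filter_true_of_mem hall]
    exact Nat.le_mul_of_pos_left _ hc
  · push Not at hall
    obtain ⟨a, ha, hpa⟩ := hall
    refine (hA a ha).trans (Nat.mul_le_mul_left c (sum_le_sum_of_subset fun x hx ↦ ?_))
    obtain ⟨hxa, hx⟩ := mem_erase.1 hx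
    exact mem_filter.2 ⟨hx, by_contra fun hpx ↦ hxa (hp x hx a ha hpx hpa)⟩

theorem card_divisorSets_le_of_twelve_mul_le {s : ℕ} (hs : 0 < s) (hpos : ∀ a ∈ A, 0 < a)
    (hA : ∀ a ∈ A, ∑ x ∈ A, x ≤ (s + 1) * ∑ x ∈ A.erase a, x) (hr : 12 * (r + 2) ≤ #A)
    (hlarge : 24000 * (s * (s + 1)) ^ 3 ≤ #A) :
    #(divisorSets (s * ∑ a ∈ A, a) (r + 2) A) ≤ (#A - 1).choose (r + 2) := by
  set W := s * ∑ a ∈ A, a with hWdef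
  set q := s * (s + 1)
  have hW : 0 < W := Nat.mul_pos hs (sum_pos hpos (card_pos.1 (by omega)))
  by_cases htwo : ∃ x ∈ A, ∃ y ∈ A, x ≠ y ∧ 8 * W < #A * x ∧ 8 * W < #A * y
  · obtain ⟨x, hx, y, hy, hxy, hxW, hyW⟩ := htwo
    exact card_divisorSets_le_of_two_large hW hr hx hy hxy hxW hyW
  push Not at htwo
  set T := {x ∈ A | #A * x ≤ 8 * W}
  have hsum : W ≤ q * ∑ x ∈ T, x := by
    rw [hWdef, mul_assoc]
    refine Nat.mul_le_mul_left s (sum_le_mul_sum_filter s.succ_pos hA fun x hx y hy hxW hyW ↦ ?_)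
    by_contra hxy
    exact hyW (htwo x hx y hy hxy (not_le.1 hxW))
  set Y := {x ∈ T | W ≤ 2 * q * #A * x}
  have hY : #A ≤ 2 * q * 8 * #Y := le_mul_card_filter_of_le_mul_sum hW (by omega)
    (card_filter_le A _) hsum fun x hx ↦ (mem_filter.1 hx).2
  have hq : q ≤ q ^ 3 := Nat.le_self_pow three_ne_zero q
  have hthree : 3 ≤ #Y := by
    by_contra! h
    have := Nat.mul_le_mul_left (2 * q * 8) (Nat.le_of_lt_succ h)
    have : 0 < q := Nat.mul_pos hs s.succ_pos
    omega
  obtain ⟨X, hXY, hX, hclose⟩ := exists_close_triple (by omega)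
    (fun y hy ↦ (mem_filter.1 (mem_filter.1 hy).1).2) (fun y hy ↦ (mem_filter.1 hy).2) hY hthree
  exact card_divisorSets_le_of_close_triple hW hpos hr
    (hXY.trans ((filter_subset _ _).trans (filter_subset _ _))) hX hclose (by omega)

end FewElements

section ManyElements

variable {A : Finset ℕ} {s t : ℕ}

theorem mul_sum_le_of_mul_sum_sdiff_le {C : Finset ℕ} {N : ℕ} (hC : C ⊆ A)
    (h : (N + 1) * ∑ a ∈ A \ C, a ≤ ∑ a ∈ A, a) :
    N * ∑ a ∈ A, a ≤ (N + 1) * ∑ a ∈ C, a := by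
  linarith [congrArg ((N + 1) * ·) (sum_sdiff (f := fun a ↦ a) hC)]

-- The weighted Markov inequality is applied twice: to the family itself, and to each of its stars
-- inside `A.erase x`. A star of a star consists of `t`-element subsets of a set of size `#A - 2`.
theorem sq_mul_card_filter_sum_sdiff_le {c : ℕ} (N : ℕ) (hS : 0 < ∑ a ∈ A, a)
    (hA : ∀ a ∈ A, ∑ x ∈ A, x ≤ c * ∑ x ∈ A.erase a, x) :
    N ^ 2 * #{C ∈ A.powersetCard (t + 2) | (N + 1) * (c * ∑ a ∈ A \ C, a) ≤ ∑ a ∈ A, a} ≤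
      (N + 1) ^ 2 * (#A - 2).choose t := by
  set F := {C ∈ A.powersetCard (t + 2) | (N + 1) * (c * ∑ a ∈ A \ C, a) ≤ ∑ a ∈ A, a}
  have hc : 0 < c := by
    obtain ⟨a, ha⟩ := nonempty_of_sum_ne_zero hS.ne'
    exact Nat.pos_of_mul_pos_right (hS.trans_le (hA a ha))
  have hF : F ⊆ A.powersetCard (t + 2) := filter_subset _ _
  have hstar : ∀ x ∈ A, N * #(F.memberSubfamily x) ≤ (N + 1) * (#A - 2).choose t := by
    intro x hx
    have hstarF := memberSubfamily_subset_powersetCard hF x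
    rw [← one_mul (N * _), ← mul_assoc]
    refine mul_card_le_of_memberSubfamily_card_le (A := A.erase x) (f := fun a ↦ a)
      (Nat.pos_of_mul_pos_left (hS.trans_le (hA x hx)))
      (fun R hR ↦ (mem_powersetCard.1 (hstarF hR)).1) (fun R hR ↦ ?_) fun y hy ↦ ?_
    · refine mul_sum_le_of_mul_sum_sdiff_le (mem_powersetCard.1 (hstarF hR)).1
        (Nat.le_of_mul_le_mul_left ?_ hc)
      rw [mul_left_comm, erase_sdiff_comm, ← sdiff_insert]
      exact (mem_filter.1 (mem_memberSubfamily.1 hR).1).2.trans (hA x hx)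
    · rw [one_mul]
      refine (card_le_card (memberSubfamily_subset_powersetCard hstarF y)).trans_eq ?_
      rw [card_powersetCard, card_erase_of_mem hy, card_erase_of_mem hx, Nat.sub_sub]
  rw [sq, sq, mul_assoc (N + 1)]
  refine mul_card_le_of_memberSubfamily_card_le hS (fun C hC ↦ (mem_powersetCard.1 (hF hC)).1)
    (fun C hC ↦ mul_sum_le_of_mul_sum_sdiff_le (mem_powersetCard.1 (hF hC)).1 ?_) hstar
  exact (Nat.mul_le_mul_left _ (Nat.le_mul_of_pos_left _ hc)).trans (mem_filter.1 hC).2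

theorem mul_card_filter_sum_sdiff_dvd_le {M : ℕ} (hs : 0 < s) (hpos : ∀ a ∈ A, 0 < a)
    (hA : 0 < #A) :
    (#A - 1 - t) * #{C ∈ A.powersetCard (t + 2) | ∑ a ∈ A \ C, a ∣ s * ∑ a ∈ A, a ∧
        s * ∑ a ∈ A, a ≤ M * ∑ a ∈ A \ C, a} ≤
      (s + 1) * (M * (#A - 1).choose (t + 1)) := by
  set S := ∑ a ∈ A, a
  set F := {C ∈ A.powersetCard (t + 2) | ∑ a ∈ A \ C, a ∣ s * S ∧ s * S ≤ M * ∑ a ∈ A \ C, a}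
  have hS : 0 < S := sum_pos hpos (card_pos.1 hA)
  have hF : F ⊆ A.powersetCard (t + 2) := filter_subset _ _
  have hsdiff : ∀ C ∈ F, ∑ a ∈ A \ C, a + ∑ a ∈ C, a = S := fun C hC ↦
    sum_sdiff (mem_powersetCard.1 (hF hC)).1
  have hlarge : ∀ C ∈ F, S ≤ (s + 1) * ∑ a ∈ C, a := by
    intro C hC
    obtain ⟨hsub, hcard⟩ := mem_powersetCard.1 (hF hC)
    have hC0 : 0 < ∑ a ∈ C, a :=
      sum_pos (fun a ha ↦ hpos a (hsub ha)) (card_pos.1 (by omega))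
    have hsum := hsdiff C hC
    have := succ_mul_le_of_dvd_mul_of_lt hs (mem_filter.1 hC).2.1 (by omega)
    linarith [congrArg ((s + 1) * ·) hsum]
  have hsums : #(F.image fun C ↦ ∑ a ∈ C, a) ≤ M := by
    have himage : (F.image fun C ↦ ∑ a ∈ C, a) =
        (F.image fun C ↦ ∑ a ∈ A \ C, a).image (S - ·) := by
      rw [image_image]
      refine image_congr fun C hC ↦ ?_
      exact Nat.eq_sub_of_add_eq' (hsdiff C hC)
    rw [himage]
    refine card_image_le.trans (card_le_of_forall_dvd_of_div_le (Nat.mul_pos hs hS) ?_ ?_) <;>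
      intro u hu <;> obtain ⟨C, hC, rfl⟩ := mem_image.1 hu
    · exact (mem_filter.1 hC).2.1
    · exact Nat.div_le_of_le_mul ((mem_filter.1 hC).2.2.trans_eq (mul_comm _ _))
  exact (card_mul_le_card_image_sum_mul_choose_pred hS hF hlarge).trans
    (Nat.mul_le_mul_left _ (Nat.mul_le_mul_right _ hsums))

theorem card_divisorSets_le_of_lt_twelve_mul {k : ℕ} (hs : 0 < s) (hpos : ∀ a ∈ A, 0 < a)
    (hA : ∀ a ∈ A, ∑ x ∈ A, x ≤ (s + 1) * ∑ x ∈ A.erase a, x) (hcard : #A = k + (t + 2))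
    (hk : #A < 12 * k) (hlarge : 24000 * (s * (s + 1) ^ 2) ≤ #A) :
    #(divisorSets (s * ∑ a ∈ A, a) k A) ≤ (#A - 1).choose k := by
  have hS : 0 < ∑ a ∈ A, a := sum_pos hpos (card_pos.1 (by omega))
  have hheavy := sq_mul_card_filter_sum_sdiff_le (t := t) 99 hS hA
  have hlight := mul_card_filter_sum_sdiff_dvd_le (t := t) (M := 100 * (s * (s + 1))) hs hpos
    (by omega)
  set S := ∑ a ∈ A, a
  set heavy := {C ∈ A.powersetCard (t + 2) | (99 + 1) * ((s + 1) * ∑ a ∈ A \ C, a) ≤ S}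
  set light := {C ∈ A.powersetCard (t + 2) | ∑ a ∈ A \ C, a ∣ s * S ∧
    s * S ≤ 100 * (s * (s + 1)) * ∑ a ∈ A \ C, a}
  have hcover : #(divisorSets (s * S) k A) ≤ #heavy + #light := by
    rw [divisorSets, card_filter_powersetCard_eq_card_filter_sdiff hcard]
    refine (card_le_card fun C hC ↦ ?_).trans (card_union_le heavy light)
    obtain ⟨hC, hdvd⟩ := mem_filter.1 hC
    rcases le_total ((99 + 1) * ((s + 1) * ∑ a ∈ A \ C, a)) S with h | h
    · exact mem_union_left _ (mem_filter.2 ⟨hC, h⟩)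
    · exact mem_union_right _ (mem_filter.2
        ⟨hC, hdvd, (Nat.mul_le_mul_left s h).trans_eq (by ring)⟩)
  have hchoose := mul_choose_le_mul_choose_succ_succ (p := 12) (q := 11) (n := #A - 2) (j := t)
    (by omega)
  rw [show #A - 2 + 1 = #A - 1 by omega] at hchoose
  have hlight' : 20 * #light ≤ (#A - 1).choose (t + 1) := by
    refine mul_le_of_mul_le_mul_of_mul_le (c := #A - 1 - t)
      (D := 100 * (s * (s + 1) ^ 2)) (by omega) ?_ (by omega)
    linarith
  rw [Nat.choose_symm_of_eq_add (show #A - 1 = k + (t + 1) by omega)]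
  omega

end ManyElements

section Bounds

variable {s k : ℕ} {A : Finset ℕ}

-- A proper subset containing `a` has its sum strictly between `s * S / (s + 1)` and `S`, where
-- `S = ∑ x ∈ A, x`, and `s * S` has no divisor in this interval.
theorem card_divisorSets_le_of_dominated {j a : ℕ} (hs : 0 < s) (hpos : ∀ x ∈ A, 0 < x)
    (hj : j + 1 < #A) (ha : a ∈ A) (hdom : (s + 1) * ∑ x ∈ A.erase a, x < ∑ x ∈ A, x) :
    #(divisorSets (s * ∑ x ∈ A, x) (j + 1) A) ≤ (#A - 1).choose (j + 1) := by
  have hX : {a} ⊆ A := singleton_subset_iff.2 ha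
  refine card_divisorSets_le_of_le_sum_card_nondivisorLink (by omega) hX ?_
  rw [sum_singleton, nondivisorLink, filter_true_of_mem, card_powersetCard,
    card_sdiff_of_subset hX, card_singleton]
  intro R hR hdvd
  obtain ⟨hsub, hcard⟩ := mem_powersetCard.1 hR
  rw [sdiff_singleton_eq_erase] at hsub
  obtain ⟨b, hb, hbR⟩ : ∃ b ∈ A.erase a, b ∉ R :=
    exists_mem_notMem_of_card_lt_card (by rw [card_erase_of_mem ha]; omega)
  have hlt : ∑ x ∈ R, x < ∑ x ∈ A.erase a, x :=
    sum_lt_sum_of_subset hsub hb hbR (hpos b (mem_of_mem_erase hb)) fun _ _ _ ↦ Nat.zero_le _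
  have htotal : a + ∑ x ∈ A.erase a, x = ∑ x ∈ A, x := add_sum_erase A (fun x ↦ x) ha
  have hadd := succ_mul_le_of_dvd_mul_of_lt hs hdvd (by omega)
  have hle := (Nat.mul_le_mul_left (s + 1) (Nat.le_add_right a _)).trans hadd
  linarith [congrArg ((s + 1) * ·) htotal]

theorem card_divisorSets_le (hs : 0 < s) (hpos : ∀ a ∈ A, 0 < a) (hk : 1 < k) (hkA : k + 1 < #A)
    (hA : 24000 * (s * (s + 1)) ^ 3 ≤ #A) :
    #(divisorSets (s * ∑ a ∈ A, a) k A) ≤ (#A - 1).choose k := by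
  obtain ⟨r, rfl⟩ := Nat.exists_eq_add_of_le' hk
  by_cases hdom : ∃ a ∈ A, (s + 1) * ∑ x ∈ A.erase a, x < ∑ x ∈ A, x
  · obtain ⟨a, ha, hlt⟩ := hdom
    exact card_divisorSets_le_of_dominated hs hpos (by omega) ha hlt
  push Not at hdom
  rcases le_or_gt (12 * (r + 2)) #A with hr | hr
  · exact card_divisorSets_le_of_twelve_mul_le hs hpos hdom hr hA
  · obtain ⟨t, ht⟩ := Nat.exists_eq_add_of_le (show r + 2 + 2 ≤ #A by omega)
    refine card_divisorSets_le_of_lt_twelve_mul (t := t) hs hpos hdom (by omega) hr (le_trans ?_ hA)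
    calc 24000 * (s * (s + 1) ^ 2) ≤ 24000 * (s ^ 3 * (s + 1) ^ 3) := by
          gcongr
          · exact Nat.le_self_pow three_ne_zero s
          · exact s.succ_pos
          · norm_num
      _ = 24000 * (s * (s + 1)) ^ 3 := by rw [mul_pow]

theorem exists_choose_le_card_divisorSets (s : ℕ) {n : ℕ} (hk : 0 < k) (hn : 0 < n) :
    ∃ A : Finset ℕ, (∀ a ∈ A, 0 < a) ∧ #A = n ∧
      (n - 1).choose k ≤ #(divisorSets (s * ∑ a ∈ A, a) k A) := by
  set E := Icc 1 (n - 1)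
  set σ := ∑ a ∈ E, a
  have hfactorial : σ + n ≤ (σ + n).factorial := Nat.self_le_factorial _
  -- Chosen so that the total is `(σ + n)!`, a multiple of every subset sum of `E`.
  set a := (σ + n).factorial - σ
  have haE : a ∉ E := fun h ↦ by have := (mem_Icc.1 h).2; omega
  have hcard : #E = n - 1 := by simp [E]
  refine ⟨insert a E, fun x hx ↦ ?_, by rw [card_insert_of_notMem haE]; omega, ?_⟩
  · rcases mem_insert.1 hx with rfl | hx
    · omega
    · exact (mem_Icc.1 hx).1
  rw [← hcard, ← card_powersetCard, sum_insert haE, Nat.sub_add_cancel (by omega)]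
  refine card_le_card fun B hB ↦ ?_
  obtain ⟨hsub, hBk⟩ := mem_powersetCard.1 hB
  refine mem_filter.2 ⟨mem_powersetCard.2 ⟨hsub.trans (subset_insert a E), hBk⟩, ?_⟩
  refine Dvd.dvd.mul_left (Nat.dvd_factorial (sum_pos (fun b hb ↦ (mem_Icc.1 (hsub hb)).1)
    (card_pos.1 (by omega))) ?_) s
  exact (sum_le_sum_of_subset hsub).trans (Nat.le_add_right σ n)

theorem dsn_eq_choose {n : ℕ} (hs : 0 < s) (hk : 1 < k) (hkn : k + 1 < n)
    (hn : 24000 * (s * (s + 1)) ^ 3 ≤ n) : dsn s k n = (n - 1).choose k := by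
  have hupper : (n - 1).choose k ∈ upperBounds
      {t | ∃ A : Finset ℕ, (∀ a ∈ A, 0 < a) ∧ #A = n ∧ dsk s k A = t} := by
    rintro _ ⟨A, hpos, rfl, rfl⟩
    exact card_divisorSets_le hs hpos hk hkn hn
  obtain ⟨A, hpos, hA, hlower⟩ := exists_choose_le_card_divisorSets s
    (Nat.zero_lt_of_lt hk) (Nat.zero_lt_of_lt hkn)
  exact le_antisymm (csSup_le ⟨_, A, hpos, hA, rfl⟩ hupper)
    (hlower.trans (le_csSup ⟨_, hupper⟩ ⟨A, hpos, hA, rfl⟩))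

end Bounds

end SDivisor

/-- **Corollary 5.** Fix `s ≥ 1`. Then `d^s(k, n) = C(n-1, k)` for all but finitely many
pairs `(k, n)` with `1 < k < n - 1`. -/
theorem zbarsky_general_case_corollary (s : ℕ) (hs : 1 ≤ s) :
    {p : ℕ × ℕ | 1 < p.1 ∧ p.1 + 1 < p.2 ∧
      dsn s p.1 p.2 ≠ (p.2 - 1).choose p.1}.Finite := by
  set N := 24000 * (s * (s + 1)) ^ 3
  refine (Set.finite_Iic (N, N)).subset ?_
  rintro ⟨k, n⟩ ⟨hk : 1 < k, hkn : k + 1 < n, hne : dsn s k n ≠ (n - 1).choose k⟩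
  have hn : n < N := by
    by_contra! h
    exact hne (SDivisor.dsn_eq_choose hs hk hkn h)
  exact Prod.mk_le_mk.2 ⟨by omega, hn.le⟩
end
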